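/- arXiv:0904.2847 — 2 statements merged into one kernel-verified Lean document; each statement's English description precedes it below -/
import Mathlib

section
/- Let B be a regular local ring, let x₁, …, x_c be a B-regular sequence contained in the maximal ideal of B, and set A = B/(x₁, …, x_c) (so A is a local complete intersection). Then every totally acyclic minimal complex C of finitely generated free A-modules has symmetric growth, i.e. cx⁺(C) = cx⁻(C). -/
/-!
STATEMENT 7: Let B be a regular local ring, x₁, …, x_c a B-regular sequence contained
in the maximal ideal of B, and A = B/(x₁, …, x_c) (so A is a local complete
intersection).  Then every totally acyclic minimal complex C of finitely generated
free A-modules has symmetric growth, i.e. cx⁺(C) = cx⁻(C).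

We present A as a local ring together with a surjective ring homomorphism π : B → A
whose kernel is the ideal (x₁, …, x_c).  A regular local ring is a commutative
Noetherian local ring whose maximal ideal can be generated by (Krull dimension of B)
many elements.
-/

universe u

open IsLocalRing Filter

/-- A commutative Noetherian local ring is regular if its maximal ideal can be
generated by `dim B` elements. -/
def IsRegularLocal (B : Type u) [CommRing B] [IsLocalRing B] : Prop :=
  IsNoetherianRing B ∧ ∃ s : Finset B, Ideal.span (s : Set B) = maximalIdeal B ∧
    (s.card : WithBot (WithTop ℕ)) = ringKrullDim B

/-- A totally acyclic complex of finitely generated free `A`-modules. -/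
structure TotallyAcyclicComplex (A : Type u) [CommRing A] : Type (u + 1) where
  C : ℤ → Type u
  [acg : ∀ n, AddCommGroup (C n)]
  [mod : ∀ n, Module A (C n)]
  free : ∀ n, Module.Free A (C n)
  fin : ∀ n, Module.Finite A (C n)
  d : ∀ n : ℤ, C (n + 1) →ₗ[A] C n
  exact : ∀ n : ℤ, LinearMap.range (d (n + 1)) = LinearMap.ker (d n)
  dualExact : ∀ n : ℤ,
    LinearMap.range ((d n).dualMap) = LinearMap.ker ((d (n + 1)).dualMap)

attribute [instance] TotallyAcyclicComplex.acg TotallyAcyclicComplex.mod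

/-- The polynomial rate of growth of a sequence of Betti numbers `β` in the positive
direction: the infimum (in `ℕ∞`, so `⊤` if no such `t` exists) of all `t ∈ ℕ` such
that `β n ≤ a · n^(t−1)` for some real `a` and all sufficiently large `n`. -/
noncomputable def complexityPlus (β : ℤ → ℕ) : ℕ∞ :=
  sInf {t : ℕ∞ | ∃ s : ℕ, t = (s : ℕ∞) ∧ ∃ a : ℝ,
    ∀ᶠ n : ℕ in atTop, (β (n : ℤ) : ℝ) ≤ a * (n : ℝ) ^ ((s : ℤ) - 1)}

/-- The polynomial rate of growth of `β` in the negative direction. -/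
noncomputable def complexityMinus (β : ℤ → ℕ) : ℕ∞ :=
  complexityPlus fun n => β (-n)

/-!
The maximal ideal of a regular local ring is generated by a regular sequence `y`. Place `C` in
degrees with differential of degree `1`, and lift its total differential to an endomorphism `D` of a
graded free `B`-module. Then `D ^ 2 = ∑ xᵢ Tᵢ`, and the Eisenbud operators `Tᵢ`, of degree `2`,
commute with `D` modulo `(x₁, …, x_c)` and with each other up to homotopy. They therefore act
commutingly on the homology of `D` modulo the maximal ideal, whose graded pieces have the ranks
of the `C n` as their lengths because `C` is minimal.

The mapping cone of `T_c`, twisted by `x_c`, is a complex of the same kind with one relation fewer.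
With no relation left, the complex is exact over `B`, and stays exact modulo the regular sequence
`y`. Hence, by induction on `c`, the homology in high degrees is generated by the operators, and
prime avoidance provides a homogeneous polynomial in them that is injective in high degrees. The
Betti numbers of the cone of this polynomial are the differences of the original ones in high
degrees, so they grow one order slower; in low degrees they bound these differences. Induction on
the order of growth thus bounds the negative Betti numbers by the positive ones, starting from the
fact that homology vanishing in high degrees vanishes everywhere. The two inequalities arise from
the dual of `C` and from `C` with its degrees negated.
-/

namespace SymmetricGrowth

universe v

section RegularLocalRing

open RingTheory.Sequence

variable {R : Type*} [CommRing R]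

lemma exists_isWeaklyRegular_cons_of_quotient {y : R} (hy : IsSMulRegular R y)
    {rs : List (R ⧸ Ideal.span {y})} (hrs : IsWeaklyRegular (R ⧸ Ideal.span {y}) rs) :
    ∃ ws : List R, IsWeaklyRegular R (y :: ws) ∧
      Ideal.ofList (y :: ws) = (Ideal.ofList rs).comap (Ideal.Quotient.mk (Ideal.span {y})) := by
  obtain ⟨ws, rfl⟩ := List.map_surjective_iff.2
    (Ideal.Quotient.mk_surjective (I := Ideal.span {y})) rs
  refine ⟨ws, .cons hy ?_, ?_⟩
  · have e : (R ⧸ Ideal.span {y}) ≃ₗ[R] QuotSMulTop y R := Submodule.quotEquivOfEq _ _ (by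
      rw [← Submodule.ideal_span_singleton_smul, smul_eq_mul, Ideal.mul_top])
    exact (e.isWeaklyRegular_congr ws).1
      ((isWeaklyRegular_map_algebraMap_iff (R ⧸ Ideal.span {y}) _ ws).1 hrs)
  · rw [Ideal.ofList_cons, ← Ideal.map_ofList,
      Ideal.comap_map_of_surjective _ Ideal.Quotient.mk_surjective, ← RingHom.ker_eq_comap_bot,
      Ideal.mk_ker, sup_comm]

variable [IsLocalRing R]

lemma exists_maximalIdeal_eq_sup_span_erase [DecidableEq R] {s : Finset R}
    (hs : Ideal.span (s : Set R) = maximalIdeal R) {y : R} (hy : y ∈ maximalIdeal R)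
    (hy2 : y ∉ maximalIdeal R ^ 2) :
    ∃ z ∈ s, maximalIdeal R = Ideal.span {y} ⊔ Ideal.span (s.erase z : Set R) := by
  obtain ⟨a, ha⟩ := Submodule.mem_span_finset'.1 (hs ▸ hy)
  obtain ⟨z, hz⟩ : ∃ z, IsUnit (a z) := by
    by_contra! hcon
    refine hy2 ?_
    rw [← ha, sq]
    exact Ideal.sum_mem _ fun z _ ↦ Ideal.mul_mem_mul ((mem_maximalIdeal _).2 (hcon z))
      (hs ▸ Ideal.subset_span z.2)
  refine ⟨z, z.2, le_antisymm ?_ (sup_le ?_ ?_)⟩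
  · rw [← hs, Ideal.span_le]
    intro w hw
    by_cases hwz : w = z
    · rw [hwz, SetLike.mem_coe, ← Ideal.unit_mul_mem_iff_mem _ hz, ← smul_eq_mul,
        eq_sub_of_add_eq ((Finset.add_sum_erase _ _ (Finset.mem_univ z)).trans ha)]
      refine sub_mem (Ideal.mem_sup_left (Ideal.mem_span_singleton_self y))
        (sum_mem fun w hw ↦ Ideal.mul_mem_left _ _ (Ideal.mem_sup_right (Ideal.subset_span ?_)))
      exact Finset.mem_erase.2 ⟨fun h ↦ Finset.ne_of_mem_erase hw (Subtype.ext h), w.2⟩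
    · exact Ideal.mem_sup_right (Ideal.subset_span (Finset.mem_erase.2 ⟨hwz, hw⟩))
  · simpa [Ideal.span_le] using hy
  · exact hs ▸ Ideal.span_mono (Finset.coe_subset.2 (Finset.erase_subset _ _))

variable [IsNoetherianRing R]

lemma eq_bot_of_le_maximalIdeal_mul {I : Ideal R} (h : I ≤ maximalIdeal R * I) : I = ⊥ :=
  Submodule.eq_bot_of_le_smul_of_le_jacobson_bot (maximalIdeal R) I (IsNoetherian.noetherian I) h
    (jacobson_eq_maximalIdeal ⊥ bot_ne_top).ge

lemma exists_mem_maximalIdeal_notMem_sq_notMem_minimalPrimes (hdim : 0 < ringKrullDim R) :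
    ∃ y ∈ maximalIdeal R, y ∉ maximalIdeal R ^ 2 ∧ ∀ P ∈ minimalPrimes R, y ∉ P := by
  have not_le (P : Ideal R) (hP : P ∈ minimalPrimes R) : ¬ maximalIdeal R ≤ P := fun hle ↦ by
    obtain rfl : P = maximalIdeal R := le_antisymm (le_maximalIdeal hP.1.1.ne_top) hle
    rw [← maximalIdeal_height_eq_ringKrullDim, Ideal.height_eq_zero_iff.2 hP] at hdim
    exact lt_irrefl _ hdim
  by_contra! hcon
  have cover : (maximalIdeal R : Set R) ⊆
      ⋃ I ∈ insert (maximalIdeal R ^ 2) (minimalPrimes R), (I : Set R) := fun y hy ↦ by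
    simp only [Set.mem_insert_iff, Set.iUnion_iUnion_eq_or_left, Set.mem_union, Set.mem_iUnion]
    by_cases h : y ∈ maximalIdeal R ^ 2
    · exact .inl h
    · obtain ⟨P, hP, hyP⟩ := hcon y hy h
      exact .inr ⟨P, hP, hyP⟩
  obtain ⟨I, rfl | hI, hle⟩ := (Ideal.subset_union_prime_finite (f := id)
    ((minimalPrimes.finite_of_isNoetherianRing R).insert _)
    (maximalIdeal R ^ 2) (maximalIdeal R ^ 2)
    fun I hI h _ ↦ (hI.resolve_left h).1.1).1 cover
  · obtain ⟨P, hP, -⟩ := Ideal.exists_minimalPrimes_le (bot_le : ⊥ ≤ maximalIdeal R)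
    refine not_le P hP ?_
    rw [eq_bot_of_le_maximalIdeal_mul (I := maximalIdeal R) (by simpa only [id, sq] using hle)]
    exact bot_le
  · exact not_le I hI hle

lemma isDomain_of_isPrime_span_singleton {y : R} (hy : y ∈ maximalIdeal R)
    (hmin : ∀ P ∈ minimalPrimes R, y ∉ P) (hprime : (Ideal.span {y}).IsPrime) : IsDomain R := by
  obtain ⟨P, hP, hPy⟩ := Ideal.exists_minimalPrimes_le (bot_le : ⊥ ≤ Ideal.span {y})
  have hP_prime : P.IsPrime := hP.1.1
  obtain rfl : P = ⊥ := eq_bot_of_le_maximalIdeal_mul fun p hp ↦ by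
    obtain ⟨a, rfl⟩ := Ideal.mem_span_singleton.1 (hPy hp)
    exact Ideal.mul_mem_mul hy ((hP_prime.mem_or_mem hp).resolve_left (hmin P hP))
  exact IsDomain.of_bot_isPrime R

lemma le_ringKrullDim_quotient_span_singleton {y : R} (hy : y ∈ maximalIdeal R) {d : ℕ}
    (hd : ((d + 1 : ℕ) : WithBot ℕ∞) ≤ ringKrullDim R) :
    (d : WithBot ℕ∞) ≤ ringKrullDim (R ⧸ Ideal.span {y}) := by
  have h := hd.trans (ringKrullDim_le_ringKrullDim_quotient_add_card ({y} : Finset R)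
    (by simpa [ringJacobson_eq_maximalIdeal] using hy))
  rw [Finset.coe_singleton, Finset.card_singleton, Nat.cast_add, Nat.cast_one] at h
  generalize ringKrullDim (R ⧸ Ideal.span {y}) = q at h ⊢
  cases q with
  | bot => simp at h
  | coe q =>
    exact_mod_cast (ENat.add_le_add_iff_right ENat.one_ne_top).1
      (by exact_mod_cast h : (d : ℕ∞) + 1 ≤ q + 1)

lemma isDomain_and_exists_isWeaklyRegular (d : ℕ) : ∀ (R : Type*) [CommRing R] [IsLocalRing R]
    [IsNoetherianRing R] (s : Finset R), s.card ≤ d → Ideal.span (s : Set R) = maximalIdeal R →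
    (d : WithBot ℕ∞) ≤ ringKrullDim R →
    IsDomain R ∧ ∃ rs : List R, IsWeaklyRegular R rs ∧ Ideal.ofList rs = maximalIdeal R := by
  classical
  induction d with
  | zero =>
    intro R _ _ _ s hs hspan _
    have hbot : maximalIdeal R = ⊥ := by
      rw [← hspan, Finset.card_eq_zero.1 (Nat.le_zero.1 hs), Finset.coe_empty, Ideal.span_empty]
    exact ⟨(isField_iff_maximalIdeal_eq.2 hbot).isDomain, [], .nil R R, by simp [hbot]⟩
  | succ d ih =>
    intro R _ _ _ s hs hspan hdim
    obtain ⟨y, hy, hy2, hmin⟩ := exists_mem_maximalIdeal_notMem_sq_notMem_minimalPrimes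
      (lt_of_lt_of_le (by exact_mod_cast d.succ_pos) hdim)
    obtain ⟨z, hz, hsup⟩ := exists_maximalIdeal_eq_sup_span_erase hspan hy hy2
    let q := Ideal.Quotient.mk (Ideal.span {y})
    have hyle : Ideal.span {y} ≤ maximalIdeal R := by simpa [Ideal.span_le] using hy
    have : Nontrivial (R ⧸ Ideal.span {y}) :=
      Ideal.Quotient.nontrivial_iff.2 (ne_top_of_le_ne_top Ideal.IsPrime.ne_top' hyle)
    have : IsLocalRing (R ⧸ Ideal.span {y}) := .of_surjective' q Ideal.Quotient.mk_surjective
    have : IsLocalHom q := .of_surjective q Ideal.Quotient.mk_surjective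
    have hcomap : (maximalIdeal _).comap q = maximalIdeal R := ((local_hom_TFAE q).out 0 4).1 this
    have hgen : Ideal.span ((s.erase z).image q : Set _) = maximalIdeal (R ⧸ Ideal.span {y}) := by
      rw [← Ideal.map_comap_of_surjective q Ideal.Quotient.mk_surjective (maximalIdeal _), hcomap,
        hsup, Ideal.map_sup, Ideal.map_quotient_self, bot_sup_eq, Ideal.map_span, Finset.coe_image]
    obtain ⟨hdom, rs, hrs, hrs_span⟩ := ih _ _ (Finset.card_image_le.trans
        ((Finset.card_erase_of_mem hz).trans_le (Nat.sub_le_of_le_add hs))) hgen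
      (le_ringKrullDim_quotient_span_singleton hy hdim)
    have := isDomain_of_isPrime_span_singleton hy hmin
      ((Ideal.Quotient.isDomain_iff_prime _).1 hdom)
    obtain ⟨ws, hws, hws_span⟩ := exists_isWeaklyRegular_cons_of_quotient
      (IsSMulRegular.of_ne_zero fun h : y = 0 ↦ hy2 (h ▸ zero_mem _)) hrs
    exact ⟨this, _, hws, by rw [hws_span, hrs_span, hcomap]⟩

lemma exists_isWeaklyRegular_ofList_eq_maximalIdeal {R : Type*} [CommRing R] [IsLocalRing R]
    (hR : IsRegularLocal R) :
    ∃ rs : List R, IsWeaklyRegular R rs ∧ Ideal.ofList rs = maximalIdeal R := by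
  obtain ⟨_, s, hs, hcard⟩ := hR
  exact (isDomain_and_exists_isWeaklyRegular _ R s le_rfl hs hcard.le).2

end RegularLocalRing

section IdealSmulTop

variable {R M M' : Type*} [CommRing R] [AddCommGroup M] [Module R M] [AddCommGroup M'] [Module R M']
  {J : Ideal R}

lemma map_mem_smul_top (f : M →ₗ[R] M') {v : M} (hv : v ∈ (J • ⊤ : Submodule R M)) :
    f v ∈ (J • ⊤ : Submodule R M') :=
  Submodule.smul_top_le_comap_smul_top J f hv

lemma mem_smul_top_prod {v : M} {w : M'} :
    (v, w) ∈ (J • ⊤ : Submodule R (M × M')) ↔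
      v ∈ (J • ⊤ : Submodule R M) ∧ w ∈ (J • ⊤ : Submodule R M') := by
  refine ⟨fun h ↦ ⟨map_mem_smul_top (.fst R M M') h, map_mem_smul_top (.snd R M M') h⟩,
    fun ⟨hv, hw⟩ ↦ ?_⟩
  simpa using add_mem (map_mem_smul_top (.inl R M M') hv) (map_mem_smul_top (.inr R M M') hw)

lemma mem_smul_top_iff_repr {ι : Type*} (b : Module.Basis ι R M) {v : M} :
    v ∈ (J • ⊤ : Submodule R M) ↔ ∀ i, b.repr v i ∈ J := by
  refine ⟨fun h i ↦ by simpa using map_mem_smul_top (b.coord i) h, fun h ↦ ?_⟩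
  rw [← b.linearCombination_repr v]
  exact sum_mem fun i _ ↦ Submodule.smul_mem_smul (h i) trivial

end IdealSmulTop

section RegularSequence

variable {R M : Type*} [CommRing R] [AddCommGroup M] [Module R M] {x : ℕ → R} {c : ℕ}

/-- The ideal `(x₀, …, x_{c-1})` generated by the first `c` terms of a sequence. -/
def seqIdeal (x : ℕ → R) (c : ℕ) : Ideal R :=
  Ideal.span (x '' Set.Iio c)

lemma mem_seqIdeal {i : ℕ} (hi : i < c) : x i ∈ seqIdeal x c :=
  Ideal.subset_span ⟨i, hi, rfl⟩

lemma seqIdeal_zero (x : ℕ → R) : seqIdeal x 0 = ⊥ := by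
  simp [seqIdeal]

lemma seqIdeal_succ (x : ℕ → R) (c : ℕ) : seqIdeal x (c + 1) = seqIdeal x c ⊔ Ideal.span {x c} := by
  rw [seqIdeal, Set.Iio_add_one_eq_Iic, ← Set.Iio_insert, Set.image_insert_eq, Ideal.span_insert,
    sup_comm, seqIdeal]

lemma seqIdeal_le_succ (x : ℕ → R) (c : ℕ) : seqIdeal x c ≤ seqIdeal x (c + 1) :=
  seqIdeal_succ x c ▸ le_sup_left

lemma mem_seqIdeal_succ_smul_top {v : M} :
    v ∈ (seqIdeal x (c + 1) • ⊤ : Submodule R M) ↔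
      ∃ u, v - x c • u ∈ (seqIdeal x c • ⊤ : Submodule R M) := by
  rw [seqIdeal_succ, Submodule.sup_smul, Submodule.ideal_span_singleton_smul, Submodule.mem_sup]
  constructor
  · rintro ⟨a, ha, _, ⟨u, -, rfl⟩, rfl⟩
    exact ⟨u, by simpa using ha⟩
  · rintro ⟨u, hu⟩
    exact ⟨_, hu, _, ⟨u, trivial, rfl⟩, sub_add_cancel _ _⟩

lemma mem_seqIdeal_smul_top {v : M} :
    v ∈ (seqIdeal x c • ⊤ : Submodule R M) ↔ ∃ u : ℕ → M, v = ∑ i ∈ Finset.range c, x i • u i := by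
  constructor
  · induction c generalizing v with
    | zero => simp [seqIdeal_zero]
    | succ c ih =>
      intro hv
      obtain ⟨w, hw⟩ := mem_seqIdeal_succ_smul_top.1 hv
      obtain ⟨u, hu⟩ := ih hw
      refine ⟨Function.update u c w, ?_⟩
      rw [Finset.sum_range_succ, Function.update_self, ← sub_eq_iff_eq_add, hu]
      exact Finset.sum_congr rfl fun i hi ↦ by
        rw [Function.update_of_ne (Finset.mem_range.1 hi).ne]
  · rintro ⟨u, rfl⟩
    exact sum_mem fun i hi ↦ Submodule.smul_mem_smul (mem_seqIdeal (Finset.mem_range.1 hi)) trivial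

variable (M) in
/-- The first `c` terms of `x` form a weakly regular sequence on `M`. Indexing by `ℕ` rather than by
a list makes it possible to vary `c` while keeping `x`. -/
def IsRegularSeq (x : ℕ → R) (c : ℕ) : Prop :=
  ∀ i < c, ∀ v : M, x i • v ∈ (seqIdeal x i • ⊤ : Submodule R M) →
    v ∈ (seqIdeal x i • ⊤ : Submodule R M)

lemma IsRegularSeq.of_succ (hx : IsRegularSeq M x (c + 1)) : IsRegularSeq M x c :=
  fun i hi ↦ hx i (hi.trans c.lt_succ_self)

lemma IsRegularSeq.of_basis {ι : Type*} (b : Module.Basis ι R M) (hx : IsRegularSeq R x c) :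
    IsRegularSeq M x c := fun i hi v hv ↦ by
  rw [mem_smul_top_iff_repr b] at hv ⊢
  intro j
  simpa using hx i hi (b.repr v j) (by simpa using hv j)

lemma IsRegularSeq.mem_smul_top_of_sum_eq_zero (hx : IsRegularSeq M x c) {v : ℕ → M}
    (hv : ∑ i ∈ Finset.range c, x i • v i = 0) :
    ∀ i < c, v i ∈ (seqIdeal x c • ⊤ : Submodule R M) := by
  induction c generalizing v with
  | zero => simp
  | succ c ih =>
    have mono := Submodule.smul_mono_left (N := (⊤ : Submodule R M)) (seqIdeal_le_succ x c)
    rw [Finset.sum_range_succ] at hv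
    have hlast : v c ∈ (seqIdeal x c • ⊤ : Submodule R M) := by
      refine hx c c.lt_succ_self _ ?_
      rw [eq_neg_of_add_eq_zero_right hv]
      exact neg_mem (mem_seqIdeal_smul_top.2 ⟨v, rfl⟩)
    obtain ⟨u, hu⟩ := mem_seqIdeal_smul_top.1 hlast
    intro i hi
    obtain hi | rfl := Nat.lt_succ_iff_lt_or_eq.1 hi
    · have h := ih hx.of_succ (v := fun i ↦ v i + x c • u i) (by
        simp only [smul_add, Finset.sum_add_distrib, smul_comm (x _) (x c), ← Finset.smul_sum, ← hu,
          hv]) i hi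
      exact mem_seqIdeal_succ_smul_top.2 ⟨-u i, by simpa using h⟩
    · exact mono hlast

lemma seqIdeal_getD (xs : List R) {c : ℕ} (hc : c ≤ xs.length) :
    seqIdeal (fun i ↦ xs.getD i 0) c = Ideal.ofList (xs.take c) := by
  induction c with
  | zero => simp [seqIdeal_zero]
  | succ c ih =>
    rw [seqIdeal_succ, ih (by omega), List.take_add_one, List.getElem?_eq_getElem hc,
      Option.toList_some, Ideal.ofList_append, Ideal.ofList_singleton, List.getD_eq_getElem _ _ hc]

lemma isRegularSeq_getD {xs : List R} (hxs : RingTheory.Sequence.IsWeaklyRegular M xs) :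
    IsRegularSeq M (fun i ↦ xs.getD i 0) xs.length := fun i hi v hv ↦ by
  rw [seqIdeal_getD xs hi.le, ← Submodule.Quotient.mk_eq_zero] at hv ⊢
  simp only [List.getD_eq_getElem _ _ hi, Submodule.Quotient.mk_smul] at hv
  exact (hxs.regular_mod_prev i hi).right_eq_zero_of_smul hv

end RegularSequence

section PrimeAvoidance

variable {A σ : Type*} [CommRing A] [SetLike σ A] [AddSubmonoidClass σ A] {𝒜 : ℕ → σ} [GradedRing 𝒜]

theorem exists_homogeneous_mem_notMem {P : HomogeneousIdeal 𝒜} {Q : Ideal A}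
    (h : ¬ P.toIdeal ≤ Q) : ∃ e, ∃ a ∈ 𝒜 e, a ∈ P ∧ a ∉ Q := by
  classical
  by_contra! hall
  refine h fun a ha ↦ ?_
  rw [← DirectSum.sum_support_decompose 𝒜 a]
  exact sum_mem fun i _ ↦ hall i _ (SetLike.coe_mem _) (P.isHomogeneous i ha)

theorem exists_homogeneous_forall_mem_notMem {Q : Ideal A} (hQ : Q.IsPrime)
    (hpos : ∃ e > 0, ∃ a ∈ 𝒜 e, a ∉ Q) (S : Finset (HomogeneousIdeal 𝒜))
    (hS : ∀ P ∈ S, ¬ P.toIdeal ≤ Q) :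
    ∃ e > 0, ∃ a ∈ 𝒜 e, (∀ P ∈ S, a ∈ P) ∧ a ∉ Q := by
  classical
  induction S using Finset.induction with
  | empty => simpa using hpos
  | insert P S _ ih =>
    obtain ⟨e, he, a, ha, haS, haQ⟩ := ih fun P' hP' ↦ hS P' (Finset.mem_insert_of_mem hP')
    obtain ⟨f, b, hb, hbP, hbQ⟩ :=
      exists_homogeneous_mem_notMem (hS P (Finset.mem_insert_self P S))
    refine ⟨e + f, by omega, a * b, SetLike.mul_mem_graded ha hb, fun P' hP' ↦ ?_, fun h ↦
      (hQ.mem_or_mem h).elim haQ hbQ⟩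
    rcases Finset.mem_insert.1 hP' with rfl | hP'
    · exact P'.toIdeal.mul_mem_left a hbP
    · exact P'.toIdeal.mul_mem_right b (haS P' hP')

theorem exists_homogeneous_notMem_of_isAntichain (S : Finset (HomogeneousIdeal 𝒜))
    (hanti : IsAntichain (· ≤ ·) (S : Set (HomogeneousIdeal 𝒜)))
    (hprime : ∀ Q ∈ S, Q.toIdeal.IsPrime) (hpos : ∀ Q ∈ S, ∃ e > 0, ∃ a ∈ 𝒜 e, a ∉ Q) :
    ∃ e > 0, ∃ a ∈ 𝒜 e, ∀ Q ∈ S, a ∉ Q := by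
  classical
  induction S using Finset.induction with
  | empty => exact ⟨1, one_pos, 0, zero_mem _, by simp⟩
  | insert Q S hQS ih =>
    obtain ⟨e, he, a, ha, haS⟩ := ih (hanti.subset (by simp))
      (fun P hP ↦ hprime P (Finset.mem_insert_of_mem hP))
      (fun P hP ↦ hpos P (Finset.mem_insert_of_mem hP))
    by_cases haQ : a ∈ Q
    swap
    · exact ⟨e, he, a, ha, (Finset.forall_mem_insert _ _ _).2 ⟨haQ, haS⟩⟩
    have hQ := hprime Q (Finset.mem_insert_self Q S)
    obtain ⟨f, hf, b, hb, hbS, hbQ⟩ := exists_homogeneous_forall_mem_notMem hQ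
      (hpos Q (Finset.mem_insert_self Q S)) S fun P hP hPQ ↦ hQS <|
        hanti.eq (by simp [hP]) (by simp) hPQ ▸ hP
    refine ⟨e * f, Nat.mul_pos he hf, a ^ f + b ^ e, add_mem ?_ ?_,
      (Finset.forall_mem_insert _ _ _).2 ⟨fun hmem ↦ ?_, fun P hP hmem ↦ ?_⟩⟩
    · rw [mul_comm]
      exact SetLike.pow_mem_graded f ha
    · exact SetLike.pow_mem_graded e hb
    · have haf : a ^ f ∈ Q.toIdeal := Ideal.pow_mem_of_mem _ haQ f hf
      exact hbQ (hQ.mem_of_pow_mem e ((Ideal.add_mem_iff_right _ haf).1 hmem))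
    · have hbe : b ^ e ∈ P.toIdeal := Ideal.pow_mem_of_mem _ (hbS P hP) e he
      exact haS P hP ((hprime P (Finset.mem_insert_of_mem hP)).mem_of_pow_mem f
        ((Ideal.add_mem_iff_left _ hbe).1 hmem))

theorem exists_homogeneous_notMem (S : Finset (Ideal A)) (hprime : ∀ Q ∈ S, Q.IsPrime)
    (hpos : ∀ Q ∈ S, ∃ e > 0, ∃ a ∈ 𝒜 e, a ∉ Q) :
    ∃ e > 0, ∃ a ∈ 𝒜 e, ∀ Q ∈ S, a ∉ Q := by
  classical
  let T := S.image (Ideal.homogeneousCore 𝒜)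
  have exists_core : ∀ P ∈ T.filter (Maximal (· ∈ T)), ∃ Q ∈ S, Q.homogeneousCore 𝒜 = P :=
    fun P hP ↦ Finset.mem_image.1 (Finset.mem_filter.1 hP).1
  have hanti : IsAntichain (· ≤ ·)
      (T.filter (Maximal (· ∈ T)) : Set (HomogeneousIdeal 𝒜)) := fun P hP P' hP' hne hle ↦
    hne ((Finset.mem_filter.1 hP).2.eq_of_le (Finset.mem_filter.1 hP').1 hle)
  obtain ⟨e, he, a, ha, haT⟩ := exists_homogeneous_notMem_of_isAntichain _ hanti
    (fun P hP ↦ by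
      obtain ⟨Q, hQ, rfl⟩ := exists_core P hP
      exact (hprime Q hQ).homogeneousCore)
    (fun P hP ↦ by
      obtain ⟨Q, hQ, rfl⟩ := exists_core P hP
      obtain ⟨e, he, a, ha, haQ⟩ := hpos Q hQ
      exact ⟨e, he, a, ha, fun h ↦ haQ (Ideal.toIdeal_homogeneousCore_le 𝒜 Q h)⟩)
  refine ⟨e, he, a, ha, fun Q hQ haQ ↦ ?_⟩
  obtain ⟨P, hQP, hP⟩ := T.exists_le_maximal (Finset.mem_image_of_mem _ hQ)
  exact haT P (Finset.mem_filter.2 ⟨hP.prop, hP⟩)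
    (hQP (Ideal.mem_homogeneousCore_of_homogeneous_of_mem ⟨e, ha⟩ haQ))

end PrimeAvoidance

section FilterRegular

variable {A : Type*} [CommRing A] {M₁ M₂ M₃ : Type*} [AddCommGroup M₁] [Module A M₁]
  [AddCommGroup M₂] [Module A M₂] [AddCommGroup M₃] [Module A M₃]

/-- The element `p` is filter-regular on `M` with respect to the ideal `I`: some power of `I`
annihilates the kernel of multiplication by `p`. -/
def IsFilterRegular (I : Ideal A) (M : Type*) [AddCommGroup M] [Module A M] (p : A) : Prop :=
  ∃ r : ℕ, ∀ m : M, p • m = 0 → ∀ a ∈ I ^ r, a • m = 0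

theorem IsFilterRegular.of_exact {I : Ideal A} {p : A} {f : M₁ →ₗ[A] M₂} {g : M₂ →ₗ[A] M₃}
    (hf : Function.Injective f) (hfg : Function.Exact f g) (h₁ : IsFilterRegular I M₁ p)
    (h₃ : IsFilterRegular I M₃ p) : IsFilterRegular I M₂ p := by
  obtain ⟨r₁, h₁⟩ := h₁
  obtain ⟨r₃, h₃⟩ := h₃
  refine ⟨r₁ + r₃, fun m hm c hc ↦ ?_⟩
  rw [pow_add] at hc
  refine Submodule.mul_induction_on hc (fun a ha b hb ↦ ?_) fun a b ha hb ↦ by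
    rw [add_smul, ha, hb, add_zero]
  have hgb : g (b • m) = 0 := by
    rw [map_smul]
    exact h₃ (g m) (by rw [← map_smul, hm, map_zero]) b hb
  obtain ⟨n, hn⟩ := (hfg _).1 hgb
  have hpn : p • n = 0 := hf (by rw [map_smul, hn, smul_comm, hm, smul_zero, map_zero])
  rw [mul_smul, ← hn, ← map_smul, h₁ n hpn a ha, map_zero]

theorem isFilterRegular_quotient_of_le {I Q : Ideal A} (h : I ≤ Q) (p : A) :
    IsFilterRegular I (A ⧸ Q) p := by
  refine ⟨1, fun m _ a ha ↦ ?_⟩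
  obtain ⟨b, rfl⟩ := Submodule.Quotient.mk_surjective _ m
  rw [← Submodule.Quotient.mk_smul, Submodule.Quotient.mk_eq_zero]
  exact Q.mul_mem_right b (h (by simpa using ha))

theorem isFilterRegular_quotient_of_notMem (I : Ideal A) {Q : Ideal A} (hQ : Q.IsPrime) {p : A}
    (hp : p ∉ Q) : IsFilterRegular I (A ⧸ Q) p := by
  refine ⟨0, fun m hm a _ ↦ ?_⟩
  obtain ⟨b, rfl⟩ := Submodule.Quotient.mk_surjective _ m
  rw [← Submodule.Quotient.mk_smul, Submodule.Quotient.mk_eq_zero] at hm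
  rw [(Submodule.Quotient.mk_eq_zero Q).2 ((hQ.mem_or_mem hm).resolve_left hp), smul_zero]

theorem IsFilterRegular.of_injective {I : Ideal A} {p : A} (f : M₁ →ₗ[A] M₂)
    (hf : Function.Injective f) (h : IsFilterRegular I M₂ p) : IsFilterRegular I M₁ p := by
  obtain ⟨r, hr⟩ := h
  exact ⟨r, fun m hm a ha ↦ hf (by
    rw [map_smul, hr (f m) (by rw [← map_smul, hm, map_zero]) a ha, map_zero])⟩

theorem exists_finset_isFilterRegular [IsNoetherianRing A] (I : Ideal A)
    (M : Type*) [AddCommGroup M] [Module A M] [Module.Finite A M] :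
    ∃ S : Finset (Ideal A), (∀ Q ∈ S, Q.IsPrime ∧ ¬ I ≤ Q) ∧
      ∀ p, (∀ Q ∈ S, p ∉ Q) → IsFilterRegular I M p := by
  classical
  induction ‹Module.Finite A M› using
    IsNoetherianRing.induction_on_isQuotientEquivQuotientPrime A with
  | subsingleton N => exact ⟨∅, by simp, fun p _ ↦ ⟨0, fun m _ a _ ↦ Subsingleton.elim _ _⟩⟩
  | quotient N Q f =>
    by_cases hQ : I ≤ Q.asIdeal
    · exact ⟨∅, by simp, fun p _ ↦
        (isFilterRegular_quotient_of_le hQ p).of_injective f.toLinearMap f.injective⟩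
    · exact ⟨{Q.asIdeal}, by simpa using ⟨Q.isPrime, hQ⟩, fun p hp ↦
        (isFilterRegular_quotient_of_notMem I Q.isPrime (hp _ (by simp))).of_injective
          f.toLinearMap f.injective⟩
  | exact N₁ N₂ N₃ f g hf _ hfg h₁ h₃ =>
    obtain ⟨S₁, hS₁, h₁⟩ := h₁
    obtain ⟨S₃, hS₃, h₃⟩ := h₃
    refine ⟨S₁ ∪ S₃, fun Q hQ ↦ (Finset.mem_union.1 hQ).elim (hS₁ Q) (hS₃ Q), fun p hp ↦ ?_⟩
    exact .of_exact hf hfg (h₁ p fun Q hQ ↦ hp Q (Finset.mem_union_left _ hQ))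
      (h₃ p fun Q hQ ↦ hp Q (Finset.mem_union_right _ hQ))

attribute [local instance] MvPolynomial.gradedAlgebra in
theorem exists_isHomogeneous_isFilterRegular {σ R : Type*} [Finite σ] [CommRing R]
    [IsNoetherianRing R] (M : Type*) [AddCommGroup M] [Module (MvPolynomial σ R) M]
    [Module.Finite (MvPolynomial σ R) M] :
    ∃ e > 0, ∃ p : MvPolynomial σ R, p.IsHomogeneous e ∧
      IsFilterRegular (Ideal.span (Set.range MvPolynomial.X)) M p := by
  obtain ⟨S, hS, hreg⟩ := exists_finset_isFilterRegular
    (Ideal.span (Set.range (MvPolynomial.X : σ → MvPolynomial σ R))) M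
  obtain ⟨e, he, p, hp, hpS⟩ := exists_homogeneous_notMem
    (𝒜 := MvPolynomial.homogeneousSubmodule σ R) S (fun Q hQ ↦ (hS Q hQ).1) fun Q hQ ↦ by
      have hX := (hS Q hQ).2
      rw [Ideal.span_le, Set.range_subset_iff] at hX
      push Not at hX
      obtain ⟨i, hi⟩ := hX
      exact ⟨1, one_pos, MvPolynomial.X i, MvPolynomial.isHomogeneous_X R i, hi⟩
  exact ⟨e, he, p, hp, hreg p hpS⟩

end FilterRegular

section Grading

variable {R M : Type*} [CommRing R] [AddCommGroup M] [Module R M]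

/-- A family of orthogonal idempotent endomorphisms indexed by `ℤ`, thought of as the projections
of `M` onto its graded pieces. They need not sum to the identity. -/
structure Grading (R M : Type*) [CommRing R] [AddCommGroup M] [Module R M] where
  proj : ℤ → Module.End R M
  proj_self (n : ℤ) (v : M) : proj n (proj n v) = proj n v
  proj_of_ne {m n : ℤ} (h : m ≠ n) (v : M) : proj m (proj n v) = 0

/-- The submodule of homogeneous elements of degree `n`. -/
def Grading.piece (𝒢 : Grading R M) (n : ℤ) : Submodule R M :=
  LinearMap.range (𝒢.proj n)

variable {M' : Type*} [AddCommGroup M'] [Module R M']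

/-- The linear map `L` raises degrees by `e`, encoded as commutation with the projections. -/
def Grading.IsHomogeneous (𝒢 : Grading R M) (𝒢' : Grading R M') (e : ℤ) (L : M →ₗ[R] M') :
    Prop :=
  ∀ n v, L (𝒢.proj n v) = 𝒢'.proj (n + e) (L v)

variable {𝒢 : Grading R M} {𝒢' : Grading R M'} {m n e f : ℤ} {v : M}

lemma Grading.proj_mem (𝒢 : Grading R M) (n : ℤ) (v : M) : 𝒢.proj n v ∈ 𝒢.piece n :=
  LinearMap.mem_range_self _ v

lemma Grading.mem_piece : v ∈ 𝒢.piece n ↔ 𝒢.proj n v = v :=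
  ⟨fun ⟨w, hw⟩ ↦ hw ▸ 𝒢.proj_self n w, fun h ↦ ⟨v, h⟩⟩

lemma Grading.proj_of_mem_of_ne (h : m ≠ n) (hv : v ∈ 𝒢.piece n) : 𝒢.proj m v = 0 := by
  rw [← mem_piece.1 hv, 𝒢.proj_of_ne h]

namespace Grading.IsHomogeneous

variable {L L₁ L₂ : M →ₗ[R] M'}

lemma apply_mem (hL : 𝒢.IsHomogeneous 𝒢' e L) (hv : v ∈ 𝒢.piece n) : L v ∈ 𝒢'.piece (n + e) := by
  rw [mem_piece, ← hL, mem_piece.1 hv]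

lemma proj_apply (hL : 𝒢.IsHomogeneous 𝒢' e L) (n : ℤ) (v : M) :
    𝒢'.proj n (L v) = L (𝒢.proj (n - e) v) := by
  rw [hL, sub_add_cancel]

lemma zero : 𝒢.IsHomogeneous 𝒢' e 0 := fun n v ↦ by simp

lemma one : 𝒢.IsHomogeneous 𝒢 0 (1 : Module.End R M) := fun n v ↦ by simp

lemma add (hL₁ : 𝒢.IsHomogeneous 𝒢' e L₁) (hL₂ : 𝒢.IsHomogeneous 𝒢' e L₂) :
    𝒢.IsHomogeneous 𝒢' e (L₁ + L₂) := fun n v ↦ by simp [hL₁ n v, hL₂ n v]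

lemma sub (hL₁ : 𝒢.IsHomogeneous 𝒢' e L₁) (hL₂ : 𝒢.IsHomogeneous 𝒢' e L₂) :
    𝒢.IsHomogeneous 𝒢' e (L₁ - L₂) := fun n v ↦ by simp [hL₁ n v, hL₂ n v]

lemma smul (a : R) (hL : 𝒢.IsHomogeneous 𝒢' e L) : 𝒢.IsHomogeneous 𝒢' e (a • L) := fun n v ↦ by
  simp [hL n v]

lemma mul {L₁ L₂ : Module.End R M} (hL₁ : 𝒢.IsHomogeneous 𝒢 e L₁)
    (hL₂ : 𝒢.IsHomogeneous 𝒢 f L₂) : 𝒢.IsHomogeneous 𝒢 (e + f) (L₁ * L₂) := fun n v ↦ by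
  simp [hL₂ n v, hL₁ (n + f), add_assoc, add_comm f]

end Grading.IsHomogeneous

end Grading

section GradedPolynomialModule

open MvPolynomial

variable {R σ H : Type*} [CommRing R] [AddCommGroup H] [Module R H]

/-- In large degrees, the family `K` is generated by the operators `θ i`, regarded as having
degree two. -/
def EventuallyGenerated (θ : σ → Module.End R H) (K : ℤ → Submodule R H) : Prop :=
  ∃ N, ∀ n ≥ N, K (n + 2) ≤ ⨆ i, (K n).map (θ i)

variable [Module (MvPolynomial σ R) H] [IsScalarTower R (MvPolynomial σ R) H]

lemma smul_mem_of_forall_X_smul_mem {L : Submodule R H}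
    (hL : ∀ i, ∀ x ∈ L, (X i : MvPolynomial σ R) • x ∈ L) (p : MvPolynomial σ R) :
    ∀ x ∈ L, p • x ∈ L := by
  induction p using MvPolynomial.induction_on with
  | C a =>
    intro x hx
    rw [← algebraMap_eq, algebraMap_smul]
    exact L.smul_mem a hx
  | add p q hp hq => exact fun x hx ↦ add_smul p q x ▸ L.add_mem (hp x hx) (hq x hx)
  | mul_X p i hp => exact fun x hx ↦ mul_smul p (X i) x ▸ hp _ (hL i x hx)

variable (R H) in
/-- Multiplication by the variables, as `R`-linear operators. -/
noncomputable def mulX (i : σ) : Module.End R H :=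
  Algebra.lsmul R R H (X i : MvPolynomial σ R)

theorem EventuallyGenerated.exists_fg_forall_le {K : ℤ → Submodule R H} (hfg : ∀ n, (K n).FG)
    (hK : EventuallyGenerated (mulX R H (σ := σ)) K) :
    ∃ W : Submodule (MvPolynomial σ R) H, W.FG ∧ ∃ N, ∀ n ≥ N, K n ≤ W.restrictScalars R := by
  obtain ⟨N, hN⟩ := hK
  obtain ⟨s, hs⟩ := hfg N
  obtain ⟨t, ht⟩ := hfg (N + 1)
  set W := Submodule.span (MvPolynomial σ R) (s ∪ t : Set H)
  have hbase : K N ≤ W.restrictScalars R ∧ K (N + 1) ≤ W.restrictScalars R := by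
    rw [← hs, ← ht, Submodule.span_le, Submodule.span_le]
    exact ⟨fun x hx ↦ Submodule.subset_span (.inl hx),
      fun x hx ↦ Submodule.subset_span (.inr hx)⟩
  have hstep (j : ℕ) : K (N + j) ≤ W.restrictScalars R := by
    induction j using Nat.twoStepInduction with
    | zero => simpa using hbase.1
    | one => exact hbase.2
    | more j ih _ =>
      rw [show N + (j + 2 : ℕ) = N + j + 2 by push_cast; ring]
      refine (hN _ (by omega)).trans (iSup_le fun i ↦ Submodule.map_le_iff_le_comap.2 ?_)
      exact fun x hx ↦ W.smul_mem (X i) (ih hx)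
  refine ⟨W, Submodule.fg_span (s.finite_toSet.union t.finite_toSet), N, fun n hn ↦ ?_⟩
  obtain ⟨j, rfl⟩ := Int.le.dest hn
  exact hstep j

theorem exists_forall_le_iSup_sup_iSup_map [IsNoetherianRing R] [Finite σ]
    {W : Submodule (MvPolynomial σ R) H} (hWfg : W.FG) {K : ℤ → Submodule R H} {N : ℤ}
    (hW : ∀ n ≥ N, K n ≤ W.restrictScalars R)
    (hX : ∀ (i : σ) n, K n ≤ (K (n + 2)).comap (mulX R H i)) :
    ∃ b, ∀ n ≥ N, K n ≤ (⨆ m ≤ b, K m) ⊔ ⨆ (i : σ) (m : ℤ), (K m).map (mulX R H i) := by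
  have : IsNoetherian (MvPolynomial σ R) W := isNoetherian_of_fg_of_noetherian W hWfg
  let U (n : Set.Ici N) : Submodule (MvPolynomial σ R) H := .span _ (K n)
  have hUW : iSup U ≤ W := iSup_le fun n ↦ Submodule.span_le.2 (hW n n.2)
  obtain ⟨t, ht⟩ := CompleteLattice.IsCompactElement.exists_finset_of_le_iSup _
    ((Submodule.fg_iff_compact _).1 (isNoetherian_submodule.1 this _ hUW)) U le_rfl
  obtain ⟨b, hb⟩ := (t.image Subtype.val).bddAbove
  let L : Submodule R H := (⨆ m ≤ b, K m) ⊔ ⨆ (i : σ) (m : ℤ), (K m).map (mulX R H i)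
  have hKL (i : σ) (m : ℤ) : (K m).map (mulX R H i) ≤ L :=
    le_sup_of_le_right (le_iSup₂_of_le i m le_rfl)
  have hLX (i : σ) : L ≤ L.comap (mulX R H i) := by
    refine sup_le (iSup₂_le fun m _ ↦ Submodule.map_le_iff_le_comap.1 (hKL i m))
      (iSup₂_le fun j m ↦ ?_)
    exact (Submodule.map_le_iff_le_comap.2 (hX j m)).trans
      (Submodule.map_le_iff_le_comap.1 (hKL i (m + 2)))
  let L' : Submodule (MvPolynomial σ R) H :=
    { L with
      smul_mem' := fun p ↦ smul_mem_of_forall_X_smul_mem (fun i x hx ↦ hLX i hx) p _ }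
  have hUL' : iSup U ≤ L' := ht.trans <| iSup₂_le fun m hm ↦ Submodule.span_le.2 fun x hx ↦
    Submodule.mem_sup_left (Submodule.mem_iSup_of_mem (m : ℤ)
      (Submodule.mem_iSup_of_mem (hb (Finset.mem_image_of_mem _ hm)) hx))
  exact ⟨b, fun n hn x hx ↦
    hUL' (Submodule.mem_iSup_of_mem ⟨n, hn⟩ (Submodule.subset_span hx))⟩

variable {𝒢 : Grading R H}

theorem EventuallyGenerated.of_le [IsNoetherianRing R] [Finite σ] (hfg : ∀ n, (𝒢.piece n).FG)
    (hgen : EventuallyGenerated (mulX R H (σ := σ)) 𝒢.piece) {K : ℤ → Submodule R H}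
    (hle : ∀ n, K n ≤ 𝒢.piece n) (hX : ∀ (i : σ) n, K n ≤ (K (n + 2)).comap (mulX R H i)) :
    EventuallyGenerated (mulX R H (σ := σ)) K := by
  obtain ⟨W, hWfg, N, hW⟩ := hgen.exists_fg_forall_le hfg
  obtain ⟨b, hb⟩ :=
    exists_forall_le_iSup_sup_iSup_map hWfg (fun n hn ↦ (hle n).trans (hW n hn)) hX
  refine ⟨max N b, fun n hn x hx ↦ ?_⟩
  rw [← Grading.mem_piece.1 (hle _ hx)]
  -- Projecting to degree `n + 2 > b` kills everything except the multiples of `K n`.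
  suffices (⨆ m ≤ b, K m) ⊔ ⨆ (i : σ) (m : ℤ), (K m).map (mulX R H i) ≤
      (⨆ i, (K n).map (mulX R H i)).comap (𝒢.proj (n + 2)) from
    this (hb (n + 2) (by omega) hx)
  refine sup_le (iSup₂_le fun m hm y hy ↦ ?_) (iSup₂_le fun i m ↦ ?_)
  · rw [Submodule.mem_comap, Grading.proj_of_mem_of_ne (by omega) (hle m hy)]
    exact zero_mem _
  · rintro _ ⟨y, hy, rfl⟩
    have hXy : mulX R H i y ∈ 𝒢.piece (m + 2) := hle _ (hX i m hy)
    rw [Submodule.mem_comap]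
    by_cases hmn : m = n
    · subst hmn
      rw [Grading.mem_piece.1 hXy]
      exact Submodule.mem_iSup_of_mem i ⟨y, hy, rfl⟩
    · rw [Grading.proj_of_mem_of_ne (by omega) hXy]
      exact zero_mem _

theorem exists_isHomogeneous_forall_smul_eq_zero [IsNoetherianRing R] [Finite σ]
    (hfg : ∀ n, (𝒢.piece n).FG) (hX : ∀ i : σ, 𝒢.IsHomogeneous 𝒢 2 (mulX R H i))
    (hgen : EventuallyGenerated (mulX R H (σ := σ)) 𝒢.piece) :
    ∃ e > 0, ∃ p : MvPolynomial σ R, p.IsHomogeneous e ∧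
      ∃ N, ∀ n ≥ N, ∀ x ∈ 𝒢.piece n, p • x = 0 → x = 0 := by
  obtain ⟨W, hWfg, N, hW⟩ := hgen.exists_fg_forall_le hfg
  have : Module.Finite (MvPolynomial σ R) W := Module.Finite.iff_fg.2 hWfg
  obtain ⟨e, he, p, hp, r, hr⟩ := exists_isHomogeneous_isFilterRegular (σ := σ) (R := R) W
  let K (n : ℤ) : Submodule R H := 𝒢.piece n ⊓ LinearMap.ker (Algebra.lsmul R R H p)
  obtain ⟨N', hN'⟩ := hgen.of_le hfg (K := K) (fun n ↦ inf_le_left) fun i n x hx ↦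
    ⟨(hX i).apply_mem hx.1,
      (smul_comm p (X i) x).trans (by rw [show p • x = 0 from hx.2, smul_zero])⟩
  set 𝔪 := Ideal.span (Set.range (X : σ → MvPolynomial σ R))
  let T := W ⊓ LinearMap.ker (Algebra.lsmul (MvPolynomial σ R) (MvPolynomial σ R) H p)
  have hKT (j : ℕ) : ∀ n ≥ max N N', K (n + 2 * j) ≤ (𝔪 ^ j • T).restrictScalars R := by
    induction j with
    | zero =>
      intro n hn x hx
      rw [Nat.cast_zero, mul_zero, add_zero] at hx
      rw [pow_zero, Ideal.one_eq_top, Submodule.top_smul]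
      exact ⟨hW n (by omega) hx.1, hx.2⟩
    | succ j ih =>
      intro n hn
      rw [show n + 2 * ((j + 1 : ℕ) : ℤ) = n + 2 * j + 2 by push_cast; ring]
      refine (hN' _ (by omega)).trans (iSup_le fun i ↦ Submodule.map_le_iff_le_comap.2 ?_)
      intro x hx
      rw [pow_succ', Submodule.mul_smul]
      have hXi : (X i : MvPolynomial σ R) ∈ 𝔪 := Ideal.subset_span ⟨i, rfl⟩
      exact (Submodule.smul_mem_smul hXi (ih n hn hx) : X i • x ∈ 𝔪 • 𝔪 ^ j • T)
  have hT : 𝔪 ^ r • T = ⊥ := by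
    refine le_bot_iff.1 (Submodule.smul_le.2 fun a ha z hz ↦ ?_)
    simpa using congrArg Subtype.val (hr ⟨z, hz.1⟩ (Subtype.ext hz.2) a ha)
  refine ⟨e, he, p, hp, max N N' + 2 * r, fun n hn x hx hpx ↦ ?_⟩
  have hxT := hKT r (n - 2 * r) (by omega) (x := x) (by rw [sub_add_cancel]; exact ⟨hx, hpx⟩)
  rwa [hT] at hxT

end GradedPolynomialModule

section CommutingOperators

open MvPolynomial
open scoped IsMulCommutative

variable {R σ H : Type*} [CommRing R] [AddCommGroup H] [Module R H]

theorem exists_algHom_apply_X_eq {E : Type*} [Ring E] [Algebra R E] {θ : σ → E}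
    (hθ : ∀ i j, Commute (θ i) (θ j)) : ∃ φ : MvPolynomial σ R →ₐ[R] E, ∀ i, φ (X i) = θ i := by
  have hcomm : ∀ a ∈ Set.range θ, ∀ b ∈ Set.range θ, a * b = b * a := by
    rintro _ ⟨i, rfl⟩ _ ⟨j, rfl⟩
    exact hθ i j
  have := Algebra.isMulCommutative_adjoin R hcomm
  let f : σ → Algebra.adjoin R (Set.range θ) := fun i ↦ ⟨θ i, Algebra.subset_adjoin ⟨i, rfl⟩⟩
  refine ⟨(Algebra.adjoin R (Set.range θ)).val.comp (aeval f), fun i ↦ ?_⟩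
  exact congrArg Subtype.val (aeval_X f i)

variable [IsNoetherianRing R] [Finite σ] {𝒢 : Grading R H} {θ : σ → Module.End R H}
  (hθ : ∀ i j, Commute (θ i) (θ j)) (hfg : ∀ n, (𝒢.piece n).FG)
  (hgen : EventuallyGenerated θ 𝒢.piece)
include hθ hfg hgen

theorem EventuallyGenerated.of_le_of_commute {K : ℤ → Submodule R H}
    (hle : ∀ n, K n ≤ 𝒢.piece n) (hK : ∀ i n, K n ≤ (K (n + 2)).comap (θ i)) :
    EventuallyGenerated θ K := by
  obtain ⟨φ, hφ⟩ := exists_algHom_apply_X_eq (R := R) hθ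
  let _ : Module (MvPolynomial σ R) H := Module.compHom H φ.toRingHom
  have : IsScalarTower R (MvPolynomial σ R) H := ⟨fun a p x ↦ by
    change φ (a • p) x = a • φ p x
    rw [map_smul, LinearMap.smul_apply]⟩
  have hX : mulX R H = θ := funext fun i ↦ LinearMap.ext fun x ↦ LinearMap.congr_fun (hφ i) x
  rw [← hX] at hgen hK ⊢
  exact hgen.of_le hfg hle hK

theorem exists_isHomogeneous_forall_apply_eq_zero (hdeg : ∀ i, 𝒢.IsHomogeneous 𝒢 2 (θ i)) :
    ∃ φ : MvPolynomial σ R →ₐ[R] Module.End R H, (∀ i, φ (X i) = θ i) ∧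
      ∃ e > 0, ∃ p : MvPolynomial σ R, p.IsHomogeneous e ∧
        ∃ N, ∀ n ≥ N, ∀ x ∈ 𝒢.piece n, φ p x = 0 → x = 0 := by
  obtain ⟨φ, hφ⟩ := exists_algHom_apply_X_eq (R := R) hθ
  let _ : Module (MvPolynomial σ R) H := Module.compHom H φ.toRingHom
  have : IsScalarTower R (MvPolynomial σ R) H := ⟨fun a p x ↦ by
    change φ (a • p) x = a • φ p x
    rw [map_smul, LinearMap.smul_apply]⟩
  have hX : mulX R H = θ := funext fun i ↦ LinearMap.ext fun x ↦ LinearMap.congr_fun (hφ i) x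
  rw [← hX] at hgen hdeg
  exact ⟨φ, hφ, exists_isHomogeneous_forall_smul_eq_zero hfg hdeg hgen⟩

end CommutingOperators

section HomologyMod

variable {R M M' : Type*} [CommRing R] [AddCommGroup M] [Module R M] [AddCommGroup M'] [Module R M']

/-- The elements of `M` that `D` maps to zero modulo `𝔞`. -/
def cyclesMod (𝔞 : Ideal R) (D : Module.End R M) : Submodule R M :=
  (𝔞 • ⊤ : Submodule R M).comap D

/-- The homology of the endomorphism induced by `D` on `M ⧸ 𝔞 • ⊤`, with elements represented by
elements of `M`. -/
abbrev HomologyMod (𝔞 : Ideal R) (D : Module.End R M) : Type _ :=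
  cyclesMod 𝔞 D ⧸ (LinearMap.range D ⊔ 𝔞 • ⊤).submoduleOf (cyclesMod 𝔞 D)

/-- The homology class of a cycle. -/
def HomologyMod.mk (𝔞 : Ideal R) (D : Module.End R M) : cyclesMod 𝔞 D →ₗ[R] HomologyMod 𝔞 D :=
  Submodule.mkQ _

/-- The linear map `f` sends cycles to cycles and boundaries to boundaries. -/
structure PreservesHomology (𝔞 : Ideal R) (D : Module.End R M) (D' : Module.End R M')
    (f : M →ₗ[R] M') : Prop where
  cyclesMod_le : cyclesMod 𝔞 D ≤ (cyclesMod 𝔞 D').comap f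
  range_le : LinearMap.range D ≤ (LinearMap.range D' ⊔ 𝔞 • ⊤).comap f

variable {𝔞 : Ideal R} {D : Module.End R M} {D' : Module.End R M'} {f : M →ₗ[R] M'}

lemma mem_range_sup_smul_top {v : M} :
    v ∈ LinearMap.range D ⊔ 𝔞 • ⊤ ↔ ∃ u, v - D u ∈ (𝔞 • ⊤ : Submodule R M) := by
  rw [Submodule.mem_sup]
  constructor
  · rintro ⟨_, ⟨u, rfl⟩, w, hw, rfl⟩
    exact ⟨u, by rwa [add_sub_cancel_left]⟩
  · exact fun ⟨u, hu⟩ ↦ ⟨D u, ⟨u, rfl⟩, _, hu, by abel⟩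

lemma HomologyMod.mk_surjective : Function.Surjective (mk 𝔞 D) :=
  Submodule.mkQ_surjective _

lemma HomologyMod.mk_eq_zero {z : cyclesMod 𝔞 D} :
    mk 𝔞 D z = 0 ↔ ∃ u, (z : M) - D u ∈ (𝔞 • ⊤ : Submodule R M) :=
  (Submodule.Quotient.mk_eq_zero _).trans mem_range_sup_smul_top

lemma HomologyMod.mk_eq_mk {z z' : cyclesMod 𝔞 D} :
    mk 𝔞 D z = mk 𝔞 D z' ↔ ∃ u, (z : M) - z' - D u ∈ (𝔞 • ⊤ : Submodule R M) := by
  rw [← sub_eq_zero, ← map_sub, mk_eq_zero, AddSubgroupClass.coe_sub]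

lemma HomologyMod.isTorsionBySet : Module.IsTorsionBySet R (HomologyMod 𝔞 D) 𝔞 := by
  intro x a
  obtain ⟨z, rfl⟩ := mk_surjective x
  change (a : R) • mk 𝔞 D z = 0
  rw [← map_smul, mk_eq_zero]
  exact ⟨0, by simpa using Submodule.smul_mem_smul a.2 Submodule.mem_top⟩

namespace PreservesHomology

/-- The map induced on homology. -/
def map (hf : PreservesHomology 𝔞 D D' f) : HomologyMod 𝔞 D →ₗ[R] HomologyMod 𝔞 D' :=
  Submodule.mapQ _ _ (f.restrict hf.cyclesMod_le) fun z hz ↦ by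
    have : LinearMap.range D ⊔ 𝔞 • ⊤ ≤ (LinearMap.range D' ⊔ 𝔞 • ⊤).comap f :=
      sup_le hf.range_le fun v hv ↦ Submodule.mem_sup_right (map_mem_smul_top f hv)
    exact this hz

lemma map_mk (hf : PreservesHomology 𝔞 D D' f) (z : cyclesMod 𝔞 D) :
    hf.map (HomologyMod.mk 𝔞 D z) = HomologyMod.mk 𝔞 D' ⟨f z, hf.cyclesMod_le z.2⟩ :=
  rfl

theorem of_commute {f : M →ₗ[R] M'}
    (hf : ∀ v, D' (f v) - f (D v) ∈ (𝔞 • ⊤ : Submodule R M')) : PreservesHomology 𝔞 D D' f where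
  cyclesMod_le z hz := by
    have := Submodule.add_mem _ (hf z) (map_mem_smul_top f hz)
    rwa [sub_add_cancel] at this
  range_le := by
    rintro _ ⟨u, rfl⟩
    refine mem_range_sup_smul_top.2 ⟨f u, ?_⟩
    rw [← neg_sub]
    exact Submodule.neg_mem _ (hf u)

end PreservesHomology

variable {𝒢 : Grading R M} {𝒢' : Grading R M'} {e n : ℤ}

theorem Grading.IsHomogeneous.preservesHomology_proj (hD : 𝒢.IsHomogeneous 𝒢 1 D) (n : ℤ) :
    PreservesHomology 𝔞 D D (𝒢.proj n) where
  cyclesMod_le z hz := by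
    rw [Submodule.mem_comap, cyclesMod, Submodule.mem_comap, hD]
    exact map_mem_smul_top _ hz
  range_le := by
    rintro _ ⟨u, rfl⟩
    rw [Submodule.mem_comap, hD.proj_apply]
    exact Submodule.mem_sup_left ⟨_, rfl⟩

/-- The grading induced on homology. -/
def homologyGrading (𝔞 : Ideal R) (hD : 𝒢.IsHomogeneous 𝒢 1 D) : Grading R (HomologyMod 𝔞 D) where
  proj n := (hD.preservesHomology_proj n).map
  proj_self n x := by
    obtain ⟨z, rfl⟩ := HomologyMod.mk_surjective x
    simp only [PreservesHomology.map_mk, 𝒢.proj_self]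
  proj_of_ne h x := by
    obtain ⟨z, rfl⟩ := HomologyMod.mk_surjective x
    simp only [PreservesHomology.map_mk, 𝒢.proj_of_ne h]
    exact map_zero _

lemma PreservesHomology.isHomogeneous_map (hf : PreservesHomology 𝔞 D D' f)
    (hD : 𝒢.IsHomogeneous 𝒢 1 D) (hD' : 𝒢'.IsHomogeneous 𝒢' 1 D')
    (hfe : 𝒢.IsHomogeneous 𝒢' e f) :
    (homologyGrading 𝔞 hD).IsHomogeneous (homologyGrading 𝔞 hD') e hf.map := fun n x ↦ by
  obtain ⟨z, rfl⟩ := HomologyMod.mk_surjective x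
  simp only [homologyGrading, PreservesHomology.map_mk, hfe n]

lemma homologyGrading_piece_eq_map (hD : 𝒢.IsHomogeneous 𝒢 1 D) (n : ℤ) :
    (homologyGrading 𝔞 hD).piece n =
      ((𝒢.piece n).submoduleOf (cyclesMod 𝔞 D)).map (HomologyMod.mk 𝔞 D) := by
  apply le_antisymm
  · rintro _ ⟨x, rfl⟩
    obtain ⟨z, rfl⟩ := HomologyMod.mk_surjective x
    exact ⟨⟨_, (hD.preservesHomology_proj n).cyclesMod_le z.2⟩, 𝒢.proj_mem n z, rfl⟩
  · rintro _ ⟨z, hz, rfl⟩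
    refine ⟨HomologyMod.mk 𝔞 D z, ?_⟩
    refine congrArg (HomologyMod.mk 𝔞 D) (Subtype.ext ?_)
    exact Grading.mem_piece.1 hz

lemma homologyGrading_piece_fg [IsNoetherianRing R] (hD : 𝒢.IsHomogeneous 𝒢 1 D)
    (hfg : (𝒢.piece n).FG) : ((homologyGrading 𝔞 hD).piece n).FG := by
  rw [homologyGrading_piece_eq_map]
  have := isNoetherian_of_fg_of_noetherian _ hfg
  refine Submodule.FG.map _ (Submodule.fg_of_fg_map_injective (cyclesMod 𝔞 D).subtype
    Subtype.val_injective ?_)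
  exact isNoetherian_submodule.1 this _ (Submodule.map_comap_le _ _)

end HomologyMod

section HilbertFunction

variable {R H H' C : Type*} [CommRing R] [AddCommGroup H] [Module R H] [AddCommGroup H']
  [Module R H'] [AddCommGroup C] [Module R C]

theorem length_eq_length_inf_ker_add_length_map (K : Submodule R H) (f : H →ₗ[R] H') :
    Module.length R K =
      Module.length R ↥(K ⊓ LinearMap.ker f) + Module.length R (K.map f) :=
  Module.length_eq_add_of_exact (Submodule.inclusion inf_le_left) (f.submoduleMap K)
    (Submodule.inclusion_injective _) (f.submoduleMap_surjective K) fun x ↦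
      ⟨fun hx ↦ ⟨⟨x, x.2, congrArg Subtype.val hx⟩, rfl⟩, fun ⟨y, hy⟩ ↦ hy ▸ Subtype.ext y.2.2⟩

theorem length_ne_top_of_isTorsionBySet (𝔪 : Ideal R) [𝔪.IsMaximal] [Module.Finite R H]
    (h : Module.IsTorsionBySet R H 𝔪) : Module.length R H ≠ ⊤ := by
  let _ := h.module
  let _ := Ideal.Quotient.field 𝔪
  have : IsScalarTower R (R ⧸ 𝔪) H := h.isScalarTower
  have : Module.Finite (R ⧸ 𝔪) H := .of_restrictScalars_finite R _ H
  rw [Module.length_eq_of_surjective (S := R) (R := R ⧸ 𝔪) Ideal.Quotient.mk_surjective]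
  exact Module.length_ne_top

/-- The lengths of the graded pieces. It takes the junk value `0` on pieces of infinite length. -/
noncomputable def Grading.hilbertFunction (𝒢 : Grading R H) (n : ℤ) : ℕ :=
  (Module.length R (𝒢.piece n)).toNat

lemma Grading.natCast_hilbertFunction {𝒢 : Grading R H} {n : ℤ}
    (h : Module.length R (𝒢.piece n) ≠ ⊤) :
    (𝒢.hilbertFunction n : ℕ∞) = Module.length R (𝒢.piece n) :=
  ENat.natCast_toNat h

variable {𝒢 : Grading R H} {𝒢' : Grading R H'} {𝒞 : Grading R C} {e : ℤ}

lemma Grading.IsHomogeneous.map_piece {f : H →ₗ[R] H'} (hf : 𝒢.IsHomogeneous 𝒢' e f) (n : ℤ) :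
    (𝒢.piece n).map f = 𝒢'.piece (n + e) ⊓ LinearMap.range f := by
  apply le_antisymm
  · rintro _ ⟨x, hx, rfl⟩
    exact ⟨hf.apply_mem hx, x, rfl⟩
  · rintro _ ⟨hx, x, rfl⟩
    exact ⟨𝒢.proj n x, 𝒢.proj_mem n x, by rw [hf, mem_piece.1 hx]⟩

lemma Grading.length_piece_eq {C' : Type*} [AddCommGroup C'] [Module R C'] {f : H →ₗ[R] H'}
    {f' : H' →ₗ[R] C'} (hf : 𝒢.IsHomogeneous 𝒢' e f) (hff' : Function.Exact f f') (n : ℤ) :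
    Module.length R (𝒢'.piece (n + e)) =
      Module.length R ((𝒢.piece n).map f) + Module.length R ((𝒢'.piece (n + e)).map f') := by
  rw [length_eq_length_inf_ker_add_length_map _ f', hff'.linearMap_ker_eq, ← hf.map_piece]

lemma length_map_le (K : Submodule R H) (f : H →ₗ[R] H') :
    Module.length R (K.map f) ≤ Module.length R K :=
  Module.length_le_of_surjective (f.submoduleMap K) (f.submoduleMap_surjective K)

lemma length_map_eq_of_forall_eq_zero {K : Submodule R H} {f : H →ₗ[R] H'}
    (h : ∀ x ∈ K, f x = 0 → x = 0) : Module.length R (K.map f) = Module.length R K := by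
  have hbot : K ⊓ LinearMap.ker f = ⊥ := (Submodule.eq_bot_iff _).2 fun x hx ↦ h x hx.1 hx.2
  rw [length_eq_length_inf_ker_add_length_map K f, hbot, Module.length_bot, zero_add]

section ExactTriangle

variable {g : Module.End R H} {i : H →ₗ[R] C} {p : C →ₗ[R] H} (hg : 𝒢.IsHomogeneous 𝒢 e g)
  (hi : 𝒢.IsHomogeneous 𝒞 (1 - e) i) (hp : 𝒞.IsHomogeneous 𝒢 0 p) (hgi : Function.Exact g i)
  (hip : Function.Exact i p) (hpg : Function.Exact p g)
  (h𝒢 : ∀ n, Module.length R (𝒢.piece n) ≠ ⊤) (h𝒞 : ∀ n, Module.length R (𝒞.piece n) ≠ ⊤)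
include hg hp hpg h𝒢 h𝒞

theorem hilbertFunction_le (n : ℤ) :
    𝒢.hilbertFunction n ≤ 𝒢.hilbertFunction (n + e) + 𝒞.hilbertFunction n := by
  have hmap : (𝒢.piece n).map g ≤ 𝒢.piece (n + e) := (hg.map_piece n).trans_le inf_le_left
  have hlen := Grading.length_piece_eq hp hpg n
  rw [add_zero] at hlen
  rw [← ENat.natCast_le_natCast, Nat.cast_add, Grading.natCast_hilbertFunction (h𝒢 _),
    Grading.natCast_hilbertFunction (h𝒢 _), Grading.natCast_hilbertFunction (h𝒞 _), hlen, add_comm]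
  exact add_le_add
    (Module.length_le_of_injective _ (Submodule.inclusion_injective hmap)) (length_map_le _ p)

include hi hgi hip in
theorem hilbertFunction_add {n : ℤ} (h : ∀ m ≥ n - 1, ∀ x ∈ 𝒢.piece m, g x = 0 → x = 0) :
    𝒞.hilbertFunction n + 𝒢.hilbertFunction (n - 1) = 𝒢.hilbertFunction (n + e - 1) := by
  have hp0 : (𝒞.piece n).map p = ⊥ := by
    rw [hp.map_piece, add_zero, ← hpg.linearMap_ker_eq, Submodule.eq_bot_iff]
    exact fun x hx ↦ h n (by omega) x hx.1 hx.2
  have h𝒞len := Grading.length_piece_eq hi hip (n + e - 1)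
  rw [show n + e - 1 + (1 - e) = n by ring, hp0, Module.length_bot, add_zero] at h𝒞len
  have h𝒢len := Grading.length_piece_eq hg hgi (n - 1)
  rw [length_map_eq_of_forall_eq_zero (h (n - 1) le_rfl), show n - 1 + e = n + e - 1 by ring,
    ← h𝒞len] at h𝒢len
  rw [← ENat.natCast_inj, Nat.cast_add, Grading.natCast_hilbertFunction (h𝒢 _),
    Grading.natCast_hilbertFunction (h𝒢 _), Grading.natCast_hilbertFunction (h𝒞 _), h𝒢len, add_comm]

end ExactTriangle

end HilbertFunction

section FreeGrading

variable {R : Type*} {M : Type v} [CommRing R] [AddCommGroup M] [Module R M] {𝒢 : Grading R M}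

/-- The module has a basis of homogeneous elements, finitely many of which lie in each degree. -/
def Grading.IsFreeOfFiniteType (𝒢 : Grading R M) : Prop :=
  ∃ (ι : Type v) (b : Module.Basis ι R M) (deg : ι → ℤ),
    (∀ j, b j ∈ 𝒢.piece (deg j)) ∧ ∀ n, (deg ⁻¹' {n}).Finite

lemma Grading.isHomogeneous_of_basis {ι : Type*} {b : Module.Basis ι R M} {deg : ι → ℤ}
    (hb : ∀ j, b j ∈ 𝒢.piece (deg j)) {e : ℤ} {L : Module.End R M}
    (hL : ∀ j, L (b j) ∈ 𝒢.piece (deg j + e)) : 𝒢.IsHomogeneous 𝒢 e L := by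
  intro n
  suffices L ∘ₗ 𝒢.proj n = 𝒢.proj (n + e) ∘ₗ L from LinearMap.congr_fun this
  refine b.ext fun j ↦ ?_
  simp only [LinearMap.comp_apply]
  obtain rfl | hj := eq_or_ne (deg j) n
  · rw [mem_piece.1 (hb j), mem_piece.1 (hL j)]
  · rw [proj_of_mem_of_ne hj.symm (hb j), proj_of_mem_of_ne (by omega) (hL j), map_zero]

lemma Grading.IsFreeOfFiniteType.piece_fg (h𝒢 : 𝒢.IsFreeOfFiniteType) (n : ℤ) :
    (𝒢.piece n).FG := by
  obtain ⟨ι, b, deg, hb, hfin⟩ := h𝒢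
  suffices 𝒢.piece n = Submodule.span R (b '' (deg ⁻¹' {n})) from
    this ▸ Submodule.fg_span ((hfin n).image b)
  apply le_antisymm
  · rw [piece, LinearMap.range_eq_map, ← b.span_eq, Submodule.map_span_le]
    rintro _ ⟨j, rfl⟩
    by_cases hj : deg j = n
    · rw [mem_piece.1 (hj ▸ hb j)]
      exact Submodule.subset_span ⟨j, hj, rfl⟩
    · rw [proj_of_mem_of_ne (Ne.symm hj) (hb j)]
      exact zero_mem _
  · rw [Submodule.span_le]
    rintro _ ⟨j, rfl, rfl⟩
    exact hb j

theorem Grading.IsFreeOfFiniteType.isRegularSeq (h𝒢 : 𝒢.IsFreeOfFiniteType) {x : ℕ → R} {c : ℕ}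
    (hx : IsRegularSeq R x c) : IsRegularSeq M x c :=
  have ⟨_, b, _⟩ := h𝒢
  hx.of_basis b

theorem Grading.IsFreeOfFiniteType.exists_eq_sum_smul (h𝒢 : 𝒢.IsFreeOfFiniteType) {e : ℤ}
    {L : Module.End R M} (hL : 𝒢.IsHomogeneous 𝒢 e L) {x : ℕ → R} {c : ℕ}
    (hLx : ∀ v, L v ∈ (seqIdeal x c • ⊤ : Submodule R M)) :
    ∃ h : ℕ → Module.End R M, (∀ i, 𝒢.IsHomogeneous 𝒢 e (h i)) ∧
      L = ∑ i ∈ Finset.range c, x i • h i := by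
  obtain ⟨ι, b, deg, hb, -⟩ := h𝒢
  choose u hu using fun j ↦ mem_seqIdeal_smul_top.1 (hLx (b j))
  refine ⟨fun i ↦ b.constr R fun j ↦ 𝒢.proj (deg j + e) (u j i),
    fun i ↦ isHomogeneous_of_basis hb fun j ↦ ?_, b.ext fun j ↦ ?_⟩
  · rw [b.constr_basis]
    exact 𝒢.proj_mem _ _
  · rw [LinearMap.sum_apply, ← mem_piece.1 (hL.apply_mem (hb j)), hu, map_sum]
    simp only [map_smul, LinearMap.smul_apply, b.constr_basis]

/-- Two copies of `M`, the second one shifted, graded so that the mapping cone of an endomorphism of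
degree `e` is homogeneous. -/
def Grading.cone (𝒢 : Grading R M) (e : ℤ) : Grading R (M × M) where
  proj n := (𝒢.proj n).prodMap (𝒢.proj (n + e - 1))
  proj_self n v := Prod.ext (𝒢.proj_self _ _) (𝒢.proj_self _ _)
  proj_of_ne h v := Prod.ext (𝒢.proj_of_ne h _) (𝒢.proj_of_ne (by omega) _)

variable {e : ℤ}

lemma Grading.isHomogeneous_inr : 𝒢.IsHomogeneous (𝒢.cone e) (1 - e) (LinearMap.inr R M M) :=
  fun n v ↦ by simp [Grading.cone, show n + (1 - e) + e - 1 = n by ring]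

lemma Grading.isHomogeneous_fst : (𝒢.cone e).IsHomogeneous 𝒢 0 (LinearMap.fst R M M) :=
  fun n v ↦ by simp [Grading.cone]

theorem Grading.IsFreeOfFiniteType.cone (h𝒢 : 𝒢.IsFreeOfFiniteType) (e : ℤ) :
    (𝒢.cone e).IsFreeOfFiniteType := by
  obtain ⟨ι, b, deg, hb, hfin⟩ := h𝒢
  refine ⟨ι ⊕ ι, b.prod b, Sum.elim deg fun j ↦ deg j - (e - 1), ?_, fun n ↦ ?_⟩
  · rintro (j | j)
    · simpa [mem_piece, Grading.cone] using mem_piece.1 (hb j)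
    · simpa [mem_piece, Grading.cone, show deg j - (e - 1) + e - 1 = deg j by ring] using
        mem_piece.1 (hb j)
  · refine Set.Finite.subset
      (((hfin n).image Sum.inl).union ((hfin (n + (e - 1))).image Sum.inr)) ?_
    rintro (j | j) hj
    · exact .inl ⟨j, hj, rfl⟩
    · exact .inr ⟨j, eq_add_of_sub_eq hj, rfl⟩

end FreeGrading

section TwistedCone

variable {R M : Type*} [CommRing R] [AddCommGroup M] [Module R M]

/-- The mapping cone of `g`, twisted by `y`: the off-diagonal entry `-y` makes it square to zero
when `D * D = y • g`. -/
def twistedCone (y : R) (D g : Module.End R M) : Module.End R (M × M) :=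
  (D ∘ₗ LinearMap.fst R M M - y • LinearMap.snd R M M).prod
    (g ∘ₗ LinearMap.fst R M M - D ∘ₗ LinearMap.snd R M M)

variable {y : R} {D g : Module.End R M} {𝔞 : Ideal R} {𝒢 : Grading R M} {e : ℤ}

lemma twistedCone_apply (z : M × M) :
    twistedCone y D g z = (D z.1 - y • z.2, g z.1 - D z.2) :=
  rfl

lemma isHomogeneous_twistedCone (hD : 𝒢.IsHomogeneous 𝒢 1 D) (hg : 𝒢.IsHomogeneous 𝒢 e g)
    (hye : e = 2 ∨ y = 0) :
    (𝒢.cone e).IsHomogeneous (𝒢.cone e) 1 (twistedCone y D g) := by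
  rintro n ⟨v, w⟩
  simp only [twistedCone_apply, Grading.cone, LinearMap.prodMap_apply, hD n, hg n, hD (n + e - 1),
    map_sub, map_smul, Prod.mk.injEq, show n + 1 + e - 1 = n + e by ring, sub_add_cancel]
  refine ⟨?_, trivial⟩
  obtain rfl | rfl := hye
  · rw [show n + 2 - 1 = n + 1 by ring]
  · rw [zero_smul, zero_smul]

section Homology

variable (hy : y ∈ 𝔞) (hg : ∀ v, D (g v) - g (D v) ∈ (𝔞 • ⊤ : Submodule R M))

include hy

lemma mem_cyclesMod_twistedCone {z : M × M} :
    z ∈ cyclesMod 𝔞 (twistedCone y D g) ↔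
      z.1 ∈ cyclesMod 𝔞 D ∧ g z.1 - D z.2 ∈ (𝔞 • ⊤ : Submodule R M) := by
  rw [cyclesMod, Submodule.mem_comap, twistedCone_apply, mem_smul_top_prod,
    Submodule.sub_mem_iff_left _ (Submodule.smul_mem_smul hy Submodule.mem_top)]
  rfl

lemma sub_twistedCone_mem_smul_top {z z' : M × M} :
    z - twistedCone y D g z' ∈ (𝔞 • ⊤ : Submodule R (M × M)) ↔
      z.1 - D z'.1 ∈ (𝔞 • ⊤ : Submodule R M) ∧
        z.2 - (g z'.1 - D z'.2) ∈ (𝔞 • ⊤ : Submodule R M) := by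
  rw [twistedCone_apply, mem_smul_top_prod, Prod.fst_sub, Prod.snd_sub, ← sub_add,
    Submodule.add_mem_iff_left _ (Submodule.smul_mem_smul hy Submodule.mem_top)]

theorem preservesHomology_inr :
    PreservesHomology 𝔞 D (twistedCone y D g) (LinearMap.inr R M M) where
  cyclesMod_le w hw := (mem_cyclesMod_twistedCone hy).2
    ⟨zero_mem _, by simpa [cyclesMod] using hw⟩
  range_le := by
    rintro _ ⟨u, rfl⟩
    exact mem_range_sup_smul_top.2
      ⟨(0, -u), (sub_twistedCone_mem_smul_top hy).2 (by simp)⟩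

theorem preservesHomology_fst :
    PreservesHomology 𝔞 (twistedCone y D g) D (LinearMap.fst R M M) where
  cyclesMod_le z hz := ((mem_cyclesMod_twistedCone hy).1 hz).1
  range_le := by
    rintro _ ⟨z, rfl⟩
    refine mem_range_sup_smul_top.2 ⟨z.1, ?_⟩
    simpa [twistedCone_apply] using Submodule.smul_mem_smul hy Submodule.mem_top

include hg

theorem exact_preservesHomology_fst_map :
    Function.Exact (preservesHomology_fst (g := g) hy).map
      (PreservesHomology.of_commute hg).map := by
  refine fun x ↦ ⟨fun hx ↦ ?_, ?_⟩
  · obtain ⟨v, rfl⟩ := HomologyMod.mk_surjective x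
    obtain ⟨w, hw⟩ := HomologyMod.mk_eq_zero.1 hx
    exact ⟨HomologyMod.mk _ _ ⟨(v, w), (mem_cyclesMod_twistedCone hy).2 ⟨v.2, hw⟩⟩, rfl⟩
  · rintro ⟨x, rfl⟩
    obtain ⟨z, rfl⟩ := HomologyMod.mk_surjective x
    exact HomologyMod.mk_eq_zero.2 ⟨_, ((mem_cyclesMod_twistedCone hy).1 z.2).2⟩

theorem exact_preservesHomology_inr_map :
    Function.Exact (preservesHomology_inr (D := D) (g := g) hy).map
      (preservesHomology_fst (g := g) hy).map := by
  refine fun x ↦ ⟨fun hx ↦ ?_, ?_⟩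
  · obtain ⟨⟨⟨v, w⟩, hz⟩, rfl⟩ := HomologyMod.mk_surjective x
    obtain ⟨u, hu : v - D u ∈ _⟩ := HomologyMod.mk_eq_zero.1 hx
    have hw : D (w - g u) ∈ (𝔞 • ⊤ : Submodule R M) := by
      have hgz : g v - D w ∈ (𝔞 • ⊤ : Submodule R M) :=
        ((mem_cyclesMod_twistedCone hy).1 hz).2
      convert Submodule.sub_mem _ (map_mem_smul_top g hu) (Submodule.add_mem _ hgz (hg u)) using 1
      simp only [map_sub]
      abel
    refine ⟨HomologyMod.mk 𝔞 D ⟨w - g u, hw⟩, HomologyMod.mk_eq_mk.2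
      ⟨(-u, 0), (sub_twistedCone_mem_smul_top hy).2 ⟨?_, by simp⟩⟩⟩
    change 0 - v - D (-u) ∈ _
    convert Submodule.neg_mem _ hu using 1
    rw [map_neg]
    abel
  · rintro ⟨x, rfl⟩
    obtain ⟨w, rfl⟩ := HomologyMod.mk_surjective x
    exact map_zero (HomologyMod.mk 𝔞 D)

theorem exact_map_preservesHomology_inr :
    Function.Exact (PreservesHomology.of_commute hg).map
      (preservesHomology_inr (D := D) (g := g) hy).map := by
  refine fun x ↦ ⟨fun hx ↦ ?_, ?_⟩
  · obtain ⟨w, rfl⟩ := HomologyMod.mk_surjective x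
    obtain ⟨⟨u, s⟩, hus⟩ := HomologyMod.mk_eq_zero.1 hx
    obtain ⟨hu, hs⟩ := (sub_twistedCone_mem_smul_top hy).1 hus
    have hDu : D u ∈ (𝔞 • ⊤ : Submodule R M) := by simpa using hu
    refine ⟨HomologyMod.mk 𝔞 D ⟨u, hDu⟩, HomologyMod.mk_eq_mk.2 ⟨s, ?_⟩⟩
    change g u - w - D s ∈ _
    change (w : M) - (g u - D s) ∈ _ at hs
    convert Submodule.neg_mem _ hs using 1
    abel
  · rintro ⟨x, rfl⟩
    obtain ⟨v, rfl⟩ := HomologyMod.mk_surjective x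
    refine HomologyMod.mk_eq_zero.2 ⟨(v, 0), (sub_twistedCone_mem_smul_top hy).2 ⟨?_, by simp⟩⟩
    change 0 - D v ∈ _
    rw [zero_sub]
    exact neg_mem v.2

end Homology
end TwistedCone

section ExactMod

variable {R M : Type*} [CommRing R] [AddCommGroup M] [Module R M]

/-- `D` induces a differential on `M ⧸ J • ⊤` with vanishing homology. -/
structure IsExactMod (J : Ideal R) (D : Module.End R M) : Prop where
  apply_apply_mem (v : M) : D (D v) ∈ (J • ⊤ : Submodule R M)
  exists_sub_mem {v : M} : D v ∈ (J • ⊤ : Submodule R M) → ∃ u, v - D u ∈ (J • ⊤ : Submodule R M)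

variable {x : ℕ → R} {c d : ℕ} {y : ℕ → R} {D g : Module.End R M}

lemma IsExactMod.subsingleton_homologyMod {J : Ideal R} (hD : IsExactMod J D) :
    Subsingleton (HomologyMod J D) := by
  refine subsingleton_of_forall_eq 0 fun z ↦ ?_
  obtain ⟨z, rfl⟩ := HomologyMod.mk_surjective z
  exact HomologyMod.mk_eq_zero.2 (hD.exists_sub_mem z.2)

theorem IsExactMod.seqIdeal_of_isRegularSeq (hy : IsRegularSeq M y d)
    (hD : IsExactMod (seqIdeal y 0) D) : IsExactMod (seqIdeal y d) D := by
  induction d with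
  | zero => exact hD
  | succ d ih =>
    obtain ⟨hsq, hex⟩ := ih hy.of_succ
    refine ⟨fun v ↦ Submodule.smul_mono_left (seqIdeal_le_succ y d) (hsq v), fun {v} hv ↦ ?_⟩
    obtain ⟨u, hu⟩ := mem_seqIdeal_succ_smul_top.1 hv
    obtain ⟨w, hw⟩ : ∃ w, u - D w ∈ (seqIdeal y d • ⊤ : Submodule R M) := by
      refine hex (hy d d.lt_succ_self _ ?_)
      convert sub_mem (hsq v) (map_mem_smul_top D hu) using 1
      rw [map_sub, map_smul, sub_sub_cancel]
    obtain ⟨t, ht⟩ : ∃ t, v - y d • w - D t ∈ (seqIdeal y d • ⊤ : Submodule R M) := by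
      refine hex ?_
      convert add_mem hu (Submodule.smul_mem _ (y d) hw) using 1
      rw [map_sub, map_smul, smul_sub, sub_add_sub_cancel]
    exact ⟨t, mem_seqIdeal_succ_smul_top.2 ⟨w, by rwa [sub_right_comm]⟩⟩

theorem IsExactMod.twistedCone_of_isRegularSeq (hx : IsRegularSeq M x (c + 1))
    (hD : IsExactMod (seqIdeal x (c + 1)) D)
    (hsq : ∀ v, D (D v) - x c • g v ∈ (seqIdeal x c • ⊤ : Submodule R M))
    (hg : ∀ v, D (g v) - g (D v) ∈ (seqIdeal x c • ⊤ : Submodule R M)) :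
    IsExactMod (seqIdeal x c) (twistedCone (x c) D g) where
  apply_apply_mem := by
    rintro ⟨v, w⟩
    simp only [twistedCone_apply, mem_smul_top_prod, map_sub, map_smul]
    constructor
    · convert hsq v using 1
      rw [smul_sub]
      abel
    · convert neg_mem (sub_mem (hg v) (hsq w)) using 1
      abel
  exists_sub_mem := by
    rintro ⟨v, w⟩ hz
    obtain ⟨hv, -⟩ : D v - x c • w ∈ (seqIdeal x c • ⊤ : Submodule R M) ∧ _ :=
      mem_smul_top_prod.1 hz
    obtain ⟨u, hu : v - D u ∈ _⟩ := hD.exists_sub_mem (mem_seqIdeal_succ_smul_top.2 ⟨w, hv⟩)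
    obtain ⟨p, hp⟩ := mem_seqIdeal_succ_smul_top.1 hu
    refine ⟨(u, -p), ?_⟩
    simp only [twistedCone_apply, mem_smul_top_prod, Prod.mk_sub_mk, map_neg, smul_neg]
    refine ⟨by convert hp using 1; abel, hx c c.lt_succ_self _ ?_⟩
    convert add_mem (sub_mem (map_mem_smul_top D hp) hv) (hsq u) using 1
    simp only [map_sub, map_smul, smul_sub, sub_neg_eq_add, smul_add]
    abel

theorem IsExactMod.cone {J : Ideal R} (hD : IsExactMod J D)
    (hg : ∀ v, D (g v) - g (D v) ∈ (J • ⊤ : Submodule R M)) :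
    IsExactMod J (twistedCone 0 D g) where
  apply_apply_mem := by
    rintro ⟨v, w⟩
    simp only [twistedCone_apply, mem_smul_top_prod, zero_smul, sub_zero, map_sub]
    refine ⟨hD.apply_apply_mem v, ?_⟩
    convert sub_mem (hD.apply_apply_mem w) (hg v) using 1
    abel
  exists_sub_mem := by
    rintro ⟨v, w⟩ hz
    simp only [twistedCone_apply, mem_smul_top_prod, zero_smul, sub_zero] at hz
    obtain ⟨u, hu⟩ := hD.exists_sub_mem hz.1
    obtain ⟨t, ht⟩ : ∃ t, g u - w - D t ∈ (J • ⊤ : Submodule R M) := by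
      refine hD.exists_sub_mem ?_
      convert add_mem (sub_mem (hg u) (map_mem_smul_top g hu)) hz.2 using 1
      simp only [map_sub]
      abel
    refine ⟨(u, t), ?_⟩
    simp only [twistedCone_apply, mem_smul_top_prod, Prod.mk_sub_mk, zero_smul, sub_zero]
    refine ⟨hu, ?_⟩
    convert neg_mem ht using 1
    abel

end ExactMod

section EisenbudOperators

variable {R : Type*} {M : Type v} [CommRing R] [AddCommGroup M] [Module R M] {𝒢 : Grading R M}
  {x : ℕ → R} {c : ℕ} {D : Module.End R M} {T : ℕ → Module.End R M} {𝔞 : Ideal R}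

/-- A homogeneous endomorphism of degree `1` of a graded free module whose reduction modulo `J` is
an exact complex. The endomorphism itself need not square to zero. -/
structure IsAcyclicLift (J : Ideal R) (𝒢 : Grading R M) (D : Module.End R M) : Prop where
  free : 𝒢.IsFreeOfFiniteType
  isHomogeneous : 𝒢.IsHomogeneous 𝒢 1 D
  exact : IsExactMod J D

/-- The Eisenbud operators of a differential `D` lifted from the quotient by `x 0, …, x (c - 1)`. -/
structure IsEisenbudSystem (x : ℕ → R) (c : ℕ) (𝒢 : Grading R M) (D : Module.End R M)
    (T : ℕ → Module.End R M) : Prop where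
  isHomogeneous (i : ℕ) : 𝒢.IsHomogeneous 𝒢 2 (T i)
  apply_apply (v : M) : D (D v) = ∑ i ∈ Finset.range c, x i • T i v

theorem IsAcyclicLift.exists_isEisenbudSystem (hD : IsAcyclicLift (seqIdeal x c) 𝒢 D) :
    ∃ T, IsEisenbudSystem x c 𝒢 D T := by
  obtain ⟨T, hT, hsum⟩ := hD.free.exists_eq_sum_smul (hD.isHomogeneous.mul hD.isHomogeneous)
    hD.exact.apply_apply_mem
  exact ⟨T, hT, fun v ↦ by simpa [LinearMap.sum_apply] using LinearMap.congr_fun hsum v⟩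

namespace IsEisenbudSystem

lemma sum_smul_commutator (hT : IsEisenbudSystem x c 𝒢 D T) (v : M) :
    ∑ i ∈ Finset.range c, x i • (D (T i v) - T i (D v)) = 0 := by
  simp only [smul_sub, ← map_smul D, Finset.sum_sub_distrib, ← map_sum, ← hT.apply_apply,
    sub_self]

theorem commutator_mem (hT : IsEisenbudSystem x c 𝒢 D T) (hx : IsRegularSeq M x c) {i : ℕ}
    (hi : i < c) (v : M) : D (T i v) - T i (D v) ∈ (seqIdeal x c • ⊤ : Submodule R M) :=
  hx.mem_smul_top_of_sum_eq_zero (hT.sum_smul_commutator v) i hi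

theorem commutator_last_mem (hT : IsEisenbudSystem x (c + 1) 𝒢 D T)
    (hx : IsRegularSeq M x (c + 1)) (v : M) :
    D (T c v) - T c (D v) ∈ (seqIdeal x c • ⊤ : Submodule R M) := by
  refine hx c c.lt_succ_self _ ?_
  have hsum := hT.sum_smul_commutator v
  rw [Finset.sum_range_succ] at hsum
  rw [eq_neg_of_add_eq_zero_right hsum]
  exact neg_mem (mem_seqIdeal_smul_top.2 ⟨_, rfl⟩)

theorem exists_homotopy (hT : IsEisenbudSystem x c 𝒢 D T) (hx : IsRegularSeq M x c)
    (h𝒢 : 𝒢.IsFreeOfFiniteType) (hD : 𝒢.IsHomogeneous 𝒢 1 D) {i j : ℕ} (hi : i < c) (hj : j < c) :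
    ∃ h : Module.End R M, ∀ v,
      T i (T j v) - T j (T i v) - (D (h v) + h (D v)) ∈ (seqIdeal x c • ⊤ : Submodule R M) := by
  obtain ⟨h, -, hsum⟩ := h𝒢.exists_eq_sum_smul
    ((hD.mul (hT.isHomogeneous j)).sub ((hT.isHomogeneous j).mul hD)) (hT.commutator_mem hx hj)
  have hh (v : M) : D (T j v) - T j (D v) = ∑ k ∈ Finset.range c, x k • h k v := by
    simpa [LinearMap.sum_apply] using LinearMap.congr_fun hsum v
  refine ⟨h i, fun v ↦ hx.mem_smul_top_of_sum_eq_zero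
    (v := fun k ↦ T k (T j v) - T j (T k v) - (D (h k v) + h k (D v))) ?_ i hi⟩
  calc ∑ k ∈ Finset.range c, x k • (T k (T j v) - T j (T k v) - (D (h k v) + h k (D v)))
    _ = D (D (T j v)) - T j (D (D v)) - (D (D (T j v) - T j (D v)) +
          (D (T j (D v)) - T j (D (D v)))) := by
      rw [hh, hh, hT.apply_apply, hT.apply_apply]
      simp only [smul_sub, smul_add, Finset.sum_sub_distrib, Finset.sum_add_distrib, map_sum,
        map_smul]
    _ = 0 := by rw [map_sub]; abel

theorem exists_twistedCone (hT : IsEisenbudSystem x (c + 1) 𝒢 D T)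
    (hx : IsRegularSeq M x (c + 1)) (h𝒢 : 𝒢.IsFreeOfFiniteType) (hD : 𝒢.IsHomogeneous 𝒢 1 D) :
    ∃ T', IsEisenbudSystem x c (𝒢.cone 2) (twistedCone (x c) D (T c)) T' ∧
      ∀ i w, T' i (0, w) = (0, T i w) := by
  obtain ⟨h, hh, hsum⟩ := h𝒢.exists_eq_sum_smul
    ((hD.mul (hT.isHomogeneous c)).sub ((hT.isHomogeneous c).mul hD)) (hT.commutator_last_mem hx)
  have hcomm (v : M) : D (T c v) - T c (D v) = ∑ i ∈ Finset.range c, x i • h i v := by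
    simpa [LinearMap.sum_apply] using LinearMap.congr_fun hsum v
  have hsq (v : M) : D (D v) = ∑ i ∈ Finset.range c, x i • T i v + x c • T c v := by
    rw [hT.apply_apply, Finset.sum_range_succ]
  obtain ⟨T', hT'⟩ : ∃ T' : ℕ → Module.End R (M × M),
      ∀ i z, T' i z = (T i z.1, T i z.2 - h i z.1) :=
    ⟨fun i ↦ (T i ∘ₗ LinearMap.fst R M M).prod
      (T i ∘ₗ LinearMap.snd R M M - h i ∘ₗ LinearMap.fst R M M), fun _ _ ↦ rfl⟩
  refine ⟨T', ⟨fun i n z ↦ ?_, fun z ↦ Prod.ext ?_ ?_⟩, fun i w ↦ by simp [hT']⟩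
  · simp only [hT', Grading.cone, LinearMap.prodMap_apply, hT.isHomogeneous i _, hh i _, map_sub]
    rw [show n + 2 - 1 + 2 = n + 2 + 2 - 1 by ring, show n + (1 + 2) = n + 2 + 2 - 1 by ring]
  · simp only [twistedCone_apply, hT', Prod.fst_sum, Prod.smul_fst, map_sub, map_smul, hsq,
      smul_sub]
    abel
  · simp only [twistedCone_apply, hT', Prod.snd_sum, Prod.smul_snd, map_sub, map_smul, smul_sub,
      Finset.sum_sub_distrib, ← hcomm, hsq]
    abel

end IsEisenbudSystem

theorem IsAcyclicLift.twistedCone (hD : IsAcyclicLift (seqIdeal x (c + 1)) 𝒢 D)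
    (hT : IsEisenbudSystem x (c + 1) 𝒢 D T) (hx : IsRegularSeq M x (c + 1)) :
    IsAcyclicLift (seqIdeal x c) (𝒢.cone 2) (twistedCone (x c) D (T c)) where
  free := hD.free.cone 2
  isHomogeneous := isHomogeneous_twistedCone hD.isHomogeneous (hT.isHomogeneous c) (.inl rfl)
  exact := hD.exact.twistedCone_of_isRegularSeq hx
    (fun v ↦ by
      rw [hT.apply_apply, Finset.sum_range_succ, add_sub_cancel_right]
      exact mem_seqIdeal_smul_top.2 ⟨_, rfl⟩)
    (hT.commutator_last_mem hx)

theorem IsAcyclicLift.cone {J : Ideal R} (hD : IsAcyclicLift J 𝒢 D) {g : Module.End R M} {e : ℤ}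
    (hge : 𝒢.IsHomogeneous 𝒢 e g) (hg : ∀ v, D (g v) - g (D v) ∈ (J • ⊤ : Submodule R M)) :
    IsAcyclicLift J (𝒢.cone e) (SymmetricGrowth.twistedCone 0 D g) where
  free := hD.free.cone e
  isHomogeneous := isHomogeneous_twistedCone hD.isHomogeneous hge (.inr rfl)
  exact := hD.exact.cone hg

namespace IsEisenbudSystem

theorem preservesHomology (hT : IsEisenbudSystem x c 𝒢 D T) (hx : IsRegularSeq M x c)
    (h𝔞 : seqIdeal x c ≤ 𝔞) (i : Fin c) : PreservesHomology 𝔞 D D (T i) :=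
  .of_commute fun v ↦ Submodule.smul_mono_left h𝔞 (hT.commutator_mem hx i.2 v)

/-- The operators induced by the Eisenbud operators on homology. -/
def homologyMap (hT : IsEisenbudSystem x c 𝒢 D T) (hx : IsRegularSeq M x c)
    (h𝔞 : seqIdeal x c ≤ 𝔞) (i : Fin c) : Module.End R (HomologyMod 𝔞 D) :=
  (hT.preservesHomology hx h𝔞 i).map

theorem commute_homologyMap (hT : IsEisenbudSystem x c 𝒢 D T) (hx : IsRegularSeq M x c)
    (h𝔞 : seqIdeal x c ≤ 𝔞) (h𝒢 : 𝒢.IsFreeOfFiniteType) (hD : 𝒢.IsHomogeneous 𝒢 1 D)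
    (i j : Fin c) : Commute (hT.homologyMap hx h𝔞 i) (hT.homologyMap hx h𝔞 j) := by
  obtain ⟨h, hh⟩ := hT.exists_homotopy hx h𝒢 hD i.2 j.2
  refine LinearMap.ext fun z ↦ ?_
  obtain ⟨z, rfl⟩ := HomologyMod.mk_surjective z
  refine HomologyMod.mk_eq_mk.2 ⟨h z, ?_⟩
  convert add_mem (Submodule.smul_mono_left h𝔞 (hh z)) (map_mem_smul_top h z.2) using 1
  change T i (T j z) - T j (T i z) - D (h z) = _
  abel

end IsEisenbudSystem

end EisenbudOperators

section ExactTriangle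

variable {R H C : Type*} [CommRing R] [AddCommGroup H] [Module R H] [AddCommGroup C] [Module R C]
  {𝒢 : Grading R H} {𝒞 : Grading R C}

theorem EventuallyGenerated.of_exact [IsNoetherianRing R] {c : ℕ} {θ : Fin (c + 1) → Module.End R H}
    {θ' : Fin c → Module.End R C} {i : H →ₗ[R] C} (hi : 𝒢.IsHomogeneous 𝒞 (-1) i)
    (hθ : ∀ j, 𝒢.IsHomogeneous 𝒢 2 (θ j)) (hθi : Function.Exact (θ (Fin.last c)) i)
    (hiθ : ∀ j, i ∘ₗ θ j.castSucc = θ' j ∘ₗ i) (hθ' : ∀ j k, Commute (θ' j) (θ' k))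
    (hfg : ∀ n, (𝒞.piece n).FG) (h𝒞 : EventuallyGenerated θ' 𝒞.piece) :
    EventuallyGenerated θ 𝒢.piece := by
  obtain ⟨N, hN⟩ := h𝒞.of_le_of_commute (K := fun n ↦ (𝒢.piece (n + 1)).map i) hθ' hfg
    (fun n ↦ by
      rintro _ ⟨v, hv, rfl⟩
      simpa using hi.apply_mem hv)
    (fun j n ↦ by
      rintro _ ⟨v, hv, rfl⟩
      refine ⟨θ j.castSucc v, ?_, LinearMap.congr_fun (hiθ j) v⟩
      rw [add_right_comm]
      exact (hθ _).apply_mem hv)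
  refine ⟨N + 1, fun n hn ↦ ?_⟩
  set S : Submodule R H := ⨆ j : Fin c, (𝒢.piece n).map (θ j.castSucc) with hS
  have hS_le : S ≤ 𝒢.piece (n + 2) := iSup_le fun j ↦
    Submodule.map_le_iff_le_comap.2 fun v hv ↦ (hθ _).apply_mem hv
  have hle : 𝒢.piece (n + 2) ≤ S ⊔ LinearMap.range (θ (Fin.last c)) := by
    have hN' := hN (n - 1) (by omega)
    simp only [show n - 1 + 2 + 1 = n + 2 by ring, sub_add_cancel, ← Submodule.map_comp,
      ← hiθ] at hN'
    rwa [← hθi.linearMap_ker_eq, ← Submodule.comap_map_eq, ← Submodule.map_le_iff_le_comap, hS,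
      Submodule.map_iSup, funext fun j ↦ (Submodule.map_comp _ i (𝒢.piece n)).symm]
  calc 𝒢.piece (n + 2)
    _ = (S ⊔ LinearMap.range (θ (Fin.last c))) ⊓ 𝒢.piece (n + 2) := (inf_eq_right.2 hle).symm
    _ = S ⊔ (𝒢.piece n).map (θ (Fin.last c)) := by
      rw [sup_inf_assoc_of_le _ hS_le, (hθ _).map_piece, inf_comm]
    _ ≤ ⨆ j, (𝒢.piece n).map (θ j) :=
      sup_le (iSup_le fun j ↦ le_iSup_of_le j.castSucc le_rfl) (le_iSup_of_le (Fin.last c) le_rfl)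

variable {g : Module.End R H} {i : H →ₗ[R] C} {p : C →ₗ[R] H} {e n : ℤ}

theorem piece_eq_bot_of_exact (hi : 𝒢.IsHomogeneous 𝒞 (1 - e) i) (hp : 𝒞.IsHomogeneous 𝒢 0 p)
    (hip : Function.Exact i p) (h : 𝒢.piece (n + e - 1) = ⊥) (h' : 𝒢.piece n = ⊥) :
    𝒞.piece n = ⊥ := by
  refine (Submodule.eq_bot_iff _).2 fun x hx ↦ ?_
  obtain ⟨w, rfl⟩ : ∃ w, i w = x := by
    refine (hip x).1 ((Submodule.eq_bot_iff _).1 h' _ ?_)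
    simpa using hp.apply_mem hx
  have hw : 𝒢.proj (n + e - 1) w = 0 := (Submodule.eq_bot_iff _).1 h _ (𝒢.proj_mem _ _)
  rw [← Grading.mem_piece.1 hx, hi.proj_apply, show n - (1 - e) = n + e - 1 by ring, hw, map_zero]

theorem piece_eq_bot_of_exact_of_forall (he : 0 < e) (hg : 𝒢.IsHomogeneous 𝒢 e g)
    (hp : 𝒞.IsHomogeneous 𝒢 0 p) (hpg : Function.Exact p g) (h𝒞 : ∀ n, 𝒞.piece n = ⊥) {N : ℤ}
    (hN : ∀ n ≥ N, 𝒢.piece n = ⊥) (n : ℤ) : 𝒢.piece n = ⊥ := by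
  have step (n : ℤ) (hn : 𝒢.piece (n + e) = ⊥) : 𝒢.piece n = ⊥ := by
    refine (Submodule.eq_bot_iff _).2 fun x hx ↦ ?_
    obtain ⟨z, hz⟩ := (hpg x).1 ((Submodule.eq_bot_iff _).1 hn _ (hg.apply_mem hx))
    rw [← Grading.mem_piece.1 hx, ← hz, hp.proj_apply,
      (Submodule.eq_bot_iff _).1 (h𝒞 _) _ (𝒞.proj_mem _ z), map_zero]
  have iterate (k : ℕ) : ∀ n, N ≤ n + k * e → 𝒢.piece n = ⊥ := by
    induction k with
    | zero => exact fun n hn ↦ hN n (by simpa using hn)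
    | succ k ih => exact fun n hn ↦ step n (ih _ (by push_cast at hn; linarith))
  exact iterate (N - n).toNat n (by nlinarith [Int.self_le_toNat (N - n)])

end ExactTriangle

section Homology

variable {R : Type*} {M : Type v} [CommRing R] [AddCommGroup M] [Module R M] {𝒢 : Grading R M}
  {x y : ℕ → R} {c d : ℕ} {D : Module.End R M} {T : ℕ → Module.End R M} {J 𝔞 : Ideal R}

section Sequences

variable (hy : IsRegularSeq R y d) (hx : IsRegularSeq R x c) (h𝔞 : seqIdeal x c ≤ seqIdeal y d)

include hy in
theorem IsAcyclicLift.subsingleton_homologyMod (hD : IsAcyclicLift (seqIdeal x 0) 𝒢 D) :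
    Subsingleton (HomologyMod (seqIdeal y d) D) := by
  refine (IsExactMod.seqIdeal_of_isRegularSeq (hD.free.isRegularSeq hy)
    ?_).subsingleton_homologyMod
  simpa only [seqIdeal_zero] using hD.exact

include hy h𝔞

theorem IsEisenbudSystem.eventuallyGenerated [IsNoetherianRing R]
    (hD : IsAcyclicLift (seqIdeal x c) 𝒢 D) (hT : IsEisenbudSystem x c 𝒢 D T) :
    EventuallyGenerated (hT.homologyMap (hD.free.isRegularSeq hx) h𝔞)
      (homologyGrading (seqIdeal y d) hD.isHomogeneous).piece := by
  induction c generalizing M with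
  | zero =>
    have := hD.subsingleton_homologyMod hy
    exact ⟨0, fun n _ v _ ↦ by rw [Subsingleton.elim v 0]; exact zero_mem _⟩
  | succ c ih =>
    have hxM := hD.free.isRegularSeq hx
    have hC := hD.twistedCone hT hxM
    obtain ⟨T', hT', hTT'⟩ := hT.exists_twistedCone hxM hD.free hD.isHomogeneous
    have h𝔞' := (seqIdeal_le_succ x c).trans h𝔞
    have hxc : x c ∈ seqIdeal y d := h𝔞 (mem_seqIdeal c.lt_succ_self)
    refine EventuallyGenerated.of_exact
      ((preservesHomology_inr hxc).isHomogeneous_map hD.isHomogeneous hC.isHomogeneous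
        Grading.isHomogeneous_inr)
      (fun j ↦ (hT.preservesHomology hxM h𝔞 j).isHomogeneous_map _ _ (hT.isHomogeneous j))
      (exact_map_preservesHomology_inr hxc fun v ↦
        Submodule.smul_mono_left h𝔞' (hT.commutator_last_mem hxM v))
      (fun j ↦ LinearMap.ext fun z ↦ ?_)
      (hT'.commute_homologyMap (hC.free.isRegularSeq hx.of_succ) h𝔞' hC.free hC.isHomogeneous)
      (fun n ↦ homologyGrading_piece_fg _ (hC.free.piece_fg n)) (ih hx.of_succ h𝔞' hC hT')
    obtain ⟨z, rfl⟩ := HomologyMod.mk_surjective z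
    exact congrArg (HomologyMod.mk _ _) (Subtype.ext (hTT' j z).symm)

include hx in
theorem IsAcyclicLift.piece_eq_bot (hD : IsAcyclicLift (seqIdeal x c) 𝒢 D) {N : ℤ}
    (hN : ∀ n ≥ N, (homologyGrading (seqIdeal y d) hD.isHomogeneous).piece n = ⊥) (n : ℤ) :
    (homologyGrading (seqIdeal y d) hD.isHomogeneous).piece n = ⊥ := by
  induction c generalizing M n with
  | zero =>
    have := hD.subsingleton_homologyMod hy
    exact Subsingleton.elim _ _
  | succ c ih =>
    have hxM := hD.free.isRegularSeq hx
    obtain ⟨T, hT⟩ := hD.exists_isEisenbudSystem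
    have hC := hD.twistedCone hT hxM
    have h𝔞' := (seqIdeal_le_succ x c).trans h𝔞
    have hxc : x c ∈ seqIdeal y d := h𝔞 (mem_seqIdeal c.lt_succ_self)
    have hcomm (v : M) := Submodule.smul_mono_left (N := ⊤) h𝔞' (hT.commutator_last_mem hxM v)
    have hp := (preservesHomology_fst hxc).isHomogeneous_map hC.isHomogeneous hD.isHomogeneous
      Grading.isHomogeneous_fst
    have hi := (preservesHomology_inr hxc).isHomogeneous_map hD.isHomogeneous hC.isHomogeneous
      Grading.isHomogeneous_inr
    have hg := (PreservesHomology.of_commute hcomm).isHomogeneous_map hD.isHomogeneous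
      hD.isHomogeneous (hT.isHomogeneous c)
    refine piece_eq_bot_of_exact_of_forall two_pos hg hp (exact_preservesHomology_fst_map hxc hcomm)
      (ih hx.of_succ h𝔞' hC fun n hn ↦ ?_) hN n
    exact piece_eq_bot_of_exact hi hp (exact_preservesHomology_inr_map hxc hcomm)
      (hN _ (by omega)) (hN n hn)

end Sequences

/-- The endomorphisms of the homology modulo `𝔞` that are induced by endomorphisms of `M` which
are homogeneous of degree `e` and commute with `D` modulo `J`. -/
def liftableEnd (hJ : J ≤ 𝔞) (𝒢 : Grading R M) (D : Module.End R M) (e : ℤ) :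
    Submodule R (Module.End R (HomologyMod 𝔞 D)) where
  carrier := {φ | ∃ L : Module.End R M, 𝒢.IsHomogeneous 𝒢 e L ∧
    ∃ hL : ∀ v, D (L v) - L (D v) ∈ (J • ⊤ : Submodule R M),
      (PreservesHomology.of_commute fun v ↦ Submodule.smul_mono_left hJ (hL v)).map = φ}
  zero_mem' := ⟨0, .zero, by simp, Submodule.linearMap_qext _ rfl⟩
  add_mem' := by
    rintro _ _ ⟨L, hLe, hL, rfl⟩ ⟨L', hLe', hL', rfl⟩
    refine ⟨L + L', hLe.add hLe', fun v ↦ ?_, Submodule.linearMap_qext _ rfl⟩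
    convert add_mem (hL v) (hL' v) using 1
    simp only [LinearMap.add_apply, map_add]
    abel
  smul_mem' := by
    rintro a _ ⟨L, hLe, hL, rfl⟩
    refine ⟨a • L, hLe.smul a, fun v ↦ ?_, Submodule.linearMap_qext _ rfl⟩
    simpa [smul_sub] using Submodule.smul_mem _ a (hL v)

section Liftable

variable {hJ : J ≤ 𝔞} {e f : ℤ}

lemma one_le_liftableEnd : 1 ≤ liftableEnd hJ 𝒢 D 0 :=
  Submodule.one_le.2 ⟨1, .one, by simp, Submodule.linearMap_qext _ rfl⟩

lemma liftableEnd_mul_le :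
    liftableEnd hJ 𝒢 D e * liftableEnd hJ 𝒢 D f ≤ liftableEnd hJ 𝒢 D (e + f) := by
  refine Submodule.mul_le.2 ?_
  rintro _ ⟨L, hLe, hL, rfl⟩ _ ⟨L', hLe', hL', rfl⟩
  refine ⟨L * L', hLe.mul hLe', fun v ↦ ?_, Submodule.linearMap_qext _ rfl⟩
  convert add_mem (hL (L' v)) (map_mem_smul_top L (hL' v)) using 1
  simp only [Module.End.mul_apply, map_sub]
  abel

lemma liftableEnd_pow_le (k : ℕ) : liftableEnd hJ 𝒢 D e ^ k ≤ liftableEnd hJ 𝒢 D (k * e) := by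
  induction k with
  | zero => simpa using one_le_liftableEnd
  | succ k ih =>
    rw [pow_succ, Nat.cast_succ, add_mul, one_mul]
    grw [ih, liftableEnd_mul_le]

theorem apply_mem_liftableEnd {σ : Type*}
    {φ : MvPolynomial σ R →ₐ[R] Module.End R (HomologyMod 𝔞 D)}
    (hφ : ∀ i, φ (.X i) ∈ liftableEnd hJ 𝒢 D e) {k : ℕ} {p : MvPolynomial σ R}
    (hp : p.IsHomogeneous k) : φ p ∈ liftableEnd hJ 𝒢 D (k * e) := by
  have hspan : (Submodule.span R (Set.range MvPolynomial.X)).map φ.toLinearMap ≤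
      liftableEnd hJ 𝒢 D e := by
    rw [Submodule.map_le_iff_le_comap, Submodule.span_le]
    rintro _ ⟨i, rfl⟩
    exact hφ i
  rw [← MvPolynomial.mem_homogeneousSubmodule, ← MvPolynomial.homogeneousSubmodule_one_pow,
    MvPolynomial.homogeneousSubmodule_one_eq_span_X] at hp
  have hφp := Submodule.mem_map_of_mem (f := φ.toLinearMap) hp
  rw [Submodule.map_pow] at hφp
  exact liftableEnd_pow_le k (pow_le_pow_left' hspan k hφp)

end Liftable

theorem IsAcyclicLift.exists_eventually_injective [IsNoetherianRing R] (hy : IsRegularSeq R y d)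
    (hx : IsRegularSeq R x c) (h𝔞 : seqIdeal x c ≤ seqIdeal y d)
    (hD : IsAcyclicLift (seqIdeal x c) 𝒢 D) :
    ∃ e > 0, ∃ g : Module.End R M, 𝒢.IsHomogeneous 𝒢 e g ∧
      ∃ hg : ∀ v, D (g v) - g (D v) ∈ (seqIdeal x c • ⊤ : Submodule R M), ∃ N, ∀ n ≥ N,
        ∀ z ∈ (homologyGrading (seqIdeal y d) hD.isHomogeneous).piece n,
          (PreservesHomology.of_commute fun v ↦ Submodule.smul_mono_left h𝔞 (hg v)).map z = 0 →
            z = 0 := by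
  have hxM := hD.free.isRegularSeq hx
  obtain ⟨T, hT⟩ := hD.exists_isEisenbudSystem
  obtain ⟨φ, hφ, k, hk, p, hp, N, hN⟩ := exists_isHomogeneous_forall_apply_eq_zero
    (hT.commute_homologyMap hxM h𝔞 hD.free hD.isHomogeneous)
    (fun n ↦ homologyGrading_piece_fg hD.isHomogeneous (hD.free.piece_fg n))
    (hT.eventuallyGenerated hy hx h𝔞 hD)
    (fun i ↦ (hT.preservesHomology hxM h𝔞 i).isHomogeneous_map _ _ (hT.isHomogeneous i))
  have hX (i : Fin c) : φ (.X i) ∈ liftableEnd h𝔞 𝒢 D 2 :=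
    ⟨T i, hT.isHomogeneous i, hT.commutator_mem hxM i.2, (hφ i).symm⟩
  obtain ⟨g, hge, hg, hgp⟩ := apply_mem_liftableEnd hX hp
  exact ⟨k * 2, by positivity, g, hge, hg, N, hgp ▸ hN⟩

end Homology

section PolynomialGrowth

/-- The growth condition `f n = O(n ^ (s - 1))`, multiplied by `n` so that no exponent is
negative. For `s = 0` it says that `f` vanishes eventually. -/
def HasGrowth (f : ℕ → ℕ) (s : ℕ) : Prop :=
  ∃ a, ∀ᶠ n in atTop, n * f n ≤ a * n ^ s

variable {f : ℕ → ℕ} {s : ℕ}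

theorem hasGrowth_iff_exists_real : HasGrowth f s ↔
    ∃ a : ℝ, ∀ᶠ n : ℕ in atTop, (f n : ℝ) ≤ a * (n : ℝ) ^ ((s : ℤ) - 1) := by
  have key (a : ℝ) {n : ℕ} (hn : 0 < n) :
      (f n : ℝ) ≤ a * (n : ℝ) ^ ((s : ℤ) - 1) ↔ (n * f n : ℝ) ≤ a * (n : ℝ) ^ s := by
    have hn' : (0 : ℝ) < n := Nat.cast_pos.2 hn
    rw [zpow_sub_one₀ hn'.ne', ← mul_assoc, ← div_eq_mul_inv, le_div_iff₀ hn', mul_comm,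
      zpow_natCast]
  constructor
  · rintro ⟨a, ha⟩
    refine ⟨a, ?_⟩
    filter_upwards [ha, eventually_gt_atTop 0] with n han hn
    exact (key a hn).2 (mod_cast han)
  · rintro ⟨a, ha⟩
    obtain ⟨b, hb⟩ := exists_nat_ge a
    refine ⟨b, ?_⟩
    filter_upwards [ha, eventually_gt_atTop 0] with n han hn
    have : (n * f n : ℝ) ≤ b * (n : ℝ) ^ s := ((key a hn).1 han).trans (by gcongr)
    exact_mod_cast this

theorem hasGrowth_zero : HasGrowth f 0 ↔ ∀ᶠ n in atTop, f n = 0 := by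
  refine ⟨fun ⟨a, ha⟩ ↦ ?_, fun h ↦ ⟨0, h.mono fun n hn ↦ by simp [hn]⟩⟩
  filter_upwards [ha, eventually_gt_atTop a] with n han hn
  by_contra hf
  have := Nat.le_mul_of_pos_right n (Nat.pos_of_ne_zero hf)
  rw [pow_zero, mul_one] at han
  omega

theorem hasGrowth_succ : HasGrowth f (s + 1) ↔ ∃ a, ∀ᶠ n in atTop, f n ≤ a * n ^ s := by
  refine exists_congr fun a ↦ eventually_congr ?_
  filter_upwards [eventually_gt_atTop 0] with n hn
  rw [pow_succ', mul_left_comm, mul_le_mul_iff_right₀ hn]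

theorem HasGrowth.exists_monotone (hf : HasGrowth f s) :
    ∃ C : ℕ → ℕ, Monotone C ∧ (∀ᶠ n in atTop, f n ≤ C n) ∧ ∃ a, ∀ n, n * C n ≤ a * n ^ s := by
  cases s with
  | zero =>
    exact ⟨0, monotone_const, (hasGrowth_zero.1 hf).mono fun n hn ↦ hn.le, 0, by simp⟩
  | succ s =>
    obtain ⟨a, ha⟩ := hasGrowth_succ.1 hf
    exact ⟨fun n ↦ a * n ^ s, fun m n h ↦ by dsimp only; gcongr, ha, a, fun n ↦ by
      rw [pow_succ', mul_left_comm]⟩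

theorem HasGrowth.of_add_le {b h : ℤ → ℕ} {e : ℕ} (hb : ∀ᶠ n in atTop, h n + b n ≤ b (n + e))
    (hh : ∀ᶠ n in atTop, h n ≤ h (n + e)) (hbs : HasGrowth (fun n ↦ b n) (s + 1)) :
    HasGrowth (fun n ↦ h n) s := by
  obtain ⟨N, hN⟩ := eventually_atTop.1 (hb.and hh)
  have key {n : ℤ} (hn : N ≤ n) (j : ℕ) : h n ≤ h (n + j * e) ∧ j * h n + b n ≤ b (n + j * e) := by
    induction j with
    | zero => simp
    | succ j ih =>
      obtain ⟨hb', hh'⟩ := hN (n + j * e) (by nlinarith)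
      rw [show n + (j + 1 : ℕ) * e = n + j * e + e by push_cast; ring, add_mul, one_mul]
      omega
  obtain ⟨a, ha⟩ := hasGrowth_succ.1 hbs
  refine ⟨a * (1 + e) ^ s, ?_⟩
  have htop : Tendsto (fun n : ℕ ↦ n + n * e) atTop atTop :=
    tendsto_atTop_mono (fun n ↦ Nat.le_add_right n _) tendsto_id
  filter_upwards [htop.eventually ha, eventually_ge_atTop N.toNat] with n han hn
  calc n * h n
    _ ≤ b (n + n * e) := by have := (key (Int.toNat_le.1 hn) n).2; omega
    _ ≤ a * (n + n * e) ^ s := mod_cast han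
    _ = a * (1 + e) ^ s * n ^ s := by rw [mul_assoc, ← mul_pow]; ring

theorem HasGrowth.of_le_add {b h : ℕ → ℕ} {e : ℕ} (he : 0 < e)
    (hb : ∀ n, b (n + e) ≤ b n + h (n + e)) (hhs : HasGrowth h s) : HasGrowth b (s + 1) := by
  obtain ⟨C, hC, hhC, a, ha⟩ := hhs.exists_monotone
  obtain ⟨N, hN⟩ := eventually_atTop.1 hhC
  set S := ∑ j ∈ Finset.range (N + e), b j
  have key (n : ℕ) : b n ≤ S + n * C n := by
    induction n using Nat.strong_induction_on with
    | _ n ih =>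
      obtain hn | hn := lt_or_ge n (N + e)
      · exact (Finset.single_le_sum (fun _ _ ↦ Nat.zero_le _) (Finset.mem_range.2 hn)).trans
          (Nat.le_add_right _ _)
      · obtain ⟨m, rfl⟩ := Nat.exists_eq_add_of_le' (le_of_add_le_right hn)
        calc b (m + e)
          _ ≤ S + m * C m + C (m + e) :=
            (hb m).trans (add_le_add (ih m (by omega)) (hN _ (by omega)))
          _ ≤ S + (m * C (m + e) + 1 * C (m + e)) := by
            rw [one_mul, add_assoc]
            gcongr
            exact hC (Nat.le_add_right m e)
          _ ≤ S + (m + e) * C (m + e) := by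
            rw [← add_mul]
            gcongr
            exact he
  refine hasGrowth_succ.2 ⟨S + a, ?_⟩
  filter_upwards [eventually_gt_atTop 0] with n hn
  calc b n
    _ ≤ S * 1 + a * n ^ s := by
      rw [mul_one]
      exact (key n).trans (Nat.add_le_add_left (ha n) S)
    _ ≤ S * n ^ s + a * n ^ s := by gcongr; exact Nat.one_le_pow _ _ hn
    _ = (S + a) * n ^ s := (add_mul ..).symm

theorem HasGrowth.comp_sub_one {b : ℤ → ℕ} (hb : HasGrowth (fun n ↦ b n) (s + 1)) :
    HasGrowth (fun n ↦ b (n - 1)) (s + 1) := by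
  obtain ⟨a, ha⟩ := hasGrowth_succ.1 hb
  refine hasGrowth_succ.2 ⟨a, ?_⟩
  filter_upwards [(tendsto_sub_atTop_nat 1).eventually ha, eventually_ge_atTop 1] with n han hn
  rw [Nat.cast_sub hn, Nat.cast_one] at han
  exact han.trans (by gcongr; exact n.sub_le 1)

theorem eventually_le_add_mul {h : ℤ → ℕ} {e : ℤ}
    (hh : ∀ᶠ n in atTop, h n ≤ h (n + e)) (k : ℕ) : ∀ᶠ n in atTop, h n ≤ h (n + k * e) := by
  induction k with
  | zero => simp
  | succ k ih =>
    have htop : Tendsto (fun n : ℤ ↦ n + k * e) atTop atTop :=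
      tendsto_atTop_add_const_right _ _ tendsto_id
    filter_upwards [ih, htop.eventually hh] with n hn hn'
    rw [Nat.cast_succ, add_mul, one_mul, ← add_assoc]
    exact hn.trans hn'

theorem HasGrowth.of_add_le_of_le {b h : ℤ → ℕ} {e e' : ℕ} (he' : 0 < e')
    (hb : ∀ᶠ n in atTop, h n + b n ≤ b (n + e)) (hh : ∀ᶠ n in atTop, h n ≤ h (n + e'))
    (hbs : HasGrowth (fun n ↦ b n) (s + 1)) : HasGrowth (fun n ↦ h n) s := by
  obtain ⟨k, rfl⟩ := Nat.exists_eq_add_of_le' he'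
  have hb' := eventually_le_add_mul (hb.mono fun n hn ↦ le_of_add_le_right hn) k
  have htop : Tendsto (fun n : ℤ ↦ n + e) atTop atTop :=
    tendsto_atTop_add_const_right _ _ tendsto_id
  refine .of_add_le (e := e * (k + 1)) ?_ (mod_cast eventually_le_add_mul hh e) hbs
  filter_upwards [hb, htop.eventually hb'] with n hn hn'
  refine hn.trans (hn'.trans_eq (congrArg b ?_))
  push_cast
  ring

end PolynomialGrowth

section BettiNumber

variable {R : Type*} {M : Type v} [CommRing R] [AddCommGroup M] [Module R M] {𝒢 : Grading R M}
  {J : Ideal R} {x y : ℕ → R} {c d s : ℕ} {D : Module.End R M}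

namespace IsAcyclicLift

/-- The length of the degree `n` part of the homology of `D` modulo `𝔪`. When `𝔪` is maximal and
`D` is minimal, this is the rank of the degree `n` part of the free module. -/
noncomputable def bettiNumber (𝔪 : Ideal R) (hD : IsAcyclicLift J 𝒢 D) (n : ℤ) : ℕ :=
  (homologyGrading 𝔪 hD.isHomogeneous).hilbertFunction n

variable [IsNoetherianRing R]

theorem length_piece_ne_top (𝔪 : Ideal R) [𝔪.IsMaximal] (hD : IsAcyclicLift J 𝒢 D) (n : ℤ) :
    Module.length R ((homologyGrading 𝔪 hD.isHomogeneous).piece n) ≠ ⊤ := by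
  have := Module.Finite.of_fg (homologyGrading_piece_fg (𝔞 := 𝔪) hD.isHomogeneous
    (hD.free.piece_fg n))
  have htors : Module.IsTorsionBySet R (HomologyMod 𝔪 D) 𝔪 := HomologyMod.isTorsionBySet
  exact length_ne_top_of_isTorsionBySet 𝔪 fun z r ↦ Subtype.ext (@htors z.1 r)

lemma natCast_bettiNumber (𝔪 : Ideal R) [𝔪.IsMaximal] (hD : IsAcyclicLift J 𝒢 D) (n : ℤ) :
    (hD.bettiNumber 𝔪 n : ℕ∞) = Module.length R ((homologyGrading 𝔪 hD.isHomogeneous).piece n) :=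
  Grading.natCast_hilbertFunction (hD.length_piece_ne_top 𝔪 n)

lemma bettiNumber_eq_zero {𝔪 : Ideal R} [𝔪.IsMaximal] {hD : IsAcyclicLift J 𝒢 D} {n : ℤ} :
    hD.bettiNumber 𝔪 n = 0 ↔ (homologyGrading 𝔪 hD.isHomogeneous).piece n = ⊥ := by
  rw [← Nat.cast_eq_zero (R := ℕ∞), natCast_bettiNumber, Module.length_eq_zero_iff,
    Submodule.subsingleton_iff_eq_bot]

variable (hy : IsRegularSeq R y d) [(seqIdeal y d).IsMaximal] (hx : IsRegularSeq R x c)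
  (h𝔪 : seqIdeal x c ≤ seqIdeal y d) (hD : IsAcyclicLift (seqIdeal x c) 𝒢 D)
include hy hx h𝔪

theorem exists_eventually_bettiNumber_le : ∃ e : ℕ, 0 < e ∧ ∀ᶠ n in atTop,
    hD.bettiNumber (seqIdeal y d) n ≤ hD.bettiNumber (seqIdeal y d) (n + e) := by
  obtain ⟨e, he, g, hge, hg, N, hN⟩ := hD.exists_eventually_injective hy hx h𝔪
  lift e to ℕ using he.le
  refine ⟨e, mod_cast he, eventually_atTop.2 ⟨N, fun n hn ↦ ?_⟩⟩
  have hgH := (PreservesHomology.of_commute fun v ↦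
    Submodule.smul_mono_left h𝔪 (hg v)).isHomogeneous_map hD.isHomogeneous hD.isHomogeneous hge
  rw [← Nat.cast_le (α := ℕ∞), natCast_bettiNumber, natCast_bettiNumber,
    ← length_map_eq_of_forall_eq_zero (hN n hn)]
  exact Module.length_le_of_injective _
    (Submodule.inclusion_injective ((hgH.map_piece n).trans_le inf_le_left))

theorem exists_cone_bettiNumber : ∃ e : ℕ, 0 < e ∧ ∃ (𝒞 : Grading R (M × M))
    (E : Module.End R (M × M)) (hE : IsAcyclicLift (seqIdeal x c) 𝒞 E),
      (∀ n, hD.bettiNumber (seqIdeal y d) n ≤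
        hD.bettiNumber (seqIdeal y d) (n + e) + hE.bettiNumber (seqIdeal y d) n) ∧
      ∀ᶠ n in atTop, hE.bettiNumber (seqIdeal y d) n + hD.bettiNumber (seqIdeal y d) (n - 1) =
        hD.bettiNumber (seqIdeal y d) (n + e - 1) := by
  obtain ⟨e, he, g, hge, hg, N, hN⟩ := hD.exists_eventually_injective hy hx h𝔪
  lift e to ℕ using he.le
  have hE := hD.cone hge hg
  have h0 : (0 : R) ∈ seqIdeal y d := zero_mem _
  have hg' (v : M) := Submodule.smul_mono_left (N := ⊤) h𝔪 (hg v)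
  have hgH := (PreservesHomology.of_commute hg').isHomogeneous_map hD.isHomogeneous
    hD.isHomogeneous hge
  have hp := (preservesHomology_fst h0).isHomogeneous_map hE.isHomogeneous hD.isHomogeneous
    Grading.isHomogeneous_fst
  have hi := (preservesHomology_inr h0).isHomogeneous_map hD.isHomogeneous hE.isHomogeneous
    Grading.isHomogeneous_inr
  refine ⟨e, mod_cast he, 𝒢.cone e, SymmetricGrowth.twistedCone 0 D g, hE,
    hilbertFunction_le hgH hp (exact_preservesHomology_fst_map h0 hg')
      (hD.length_piece_ne_top _) (hE.length_piece_ne_top _), ?_⟩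
  filter_upwards [eventually_ge_atTop (N + 1)] with n hn
  exact hilbertFunction_add hgH hi hp (exact_map_preservesHomology_inr h0 hg')
    (exact_preservesHomology_inr_map h0 hg') (exact_preservesHomology_fst_map h0 hg')
    (hD.length_piece_ne_top _) (hE.length_piece_ne_top _) fun m hm ↦ hN m (by omega)

-- The differences of the Betti numbers of `D` along an eventually injective operator are the Betti
-- numbers of its cone, which therefore grow one degree slower.
theorem hasGrowth_bettiNumber_neg (hs : HasGrowth (fun n ↦ hD.bettiNumber (seqIdeal y d) n) s) :
    HasGrowth (fun n ↦ hD.bettiNumber (seqIdeal y d) (-n)) s := by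
  induction s generalizing M with
  | zero =>
    obtain ⟨N, hN⟩ := eventually_atTop.1 (hasGrowth_zero.1 hs)
    refine hasGrowth_zero.2 (.of_forall fun n ↦ bettiNumber_eq_zero.2 ?_)
    refine hD.piece_eq_bot hy hx h𝔪 (N := N) (fun m hm ↦ (bettiNumber_eq_zero (hD := hD)).1 ?_) _
    lift m to ℕ using N.cast_nonneg.trans hm
    exact hN m (mod_cast hm)
  | succ s ih =>
    obtain ⟨e, he, 𝒞, E, hE, hle, hadd⟩ := hD.exists_cone_bettiNumber hy hx h𝔪
    obtain ⟨e', he', hmono⟩ := hE.exists_eventually_bettiNumber_le hy hx h𝔪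
    have hEs : HasGrowth (fun n ↦ hE.bettiNumber (seqIdeal y d) n) s := by
      refine .of_add_le_of_le (b := fun n ↦ hD.bettiNumber _ (n - 1)) (e := e) he'
        (hadd.mono fun n hn ↦ ?_) hmono hs.comp_sub_one
      exact hn.le
    refine .of_le_add he (fun n ↦ ?_) (ih hE hEs)
    simpa using hle (-(n + e : ℕ))

end IsAcyclicLift

end BettiNumber

section FinsuppGrading

variable {R : Type*} {ι : Type*} [CommRing R] {deg : ι → ℤ}

open Classical in
/-- The grading of a free module for which the basis element `j` has degree `deg j`. -/
noncomputable def finsuppGrading (R : Type*) [CommRing R] (deg : ι → ℤ) : Grading R (ι →₀ R) where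
  proj n := (Finsupp.supported R R (deg ⁻¹' {n})).subtype ∘ₗ Finsupp.restrictDom R R (deg ⁻¹' {n})
  proj_self n v := by
    ext j
    by_cases h : deg j = n <;> simp [h]
  proj_of_ne {m n} hmn v := by
    ext j
    by_cases h : deg j = m <;> simp [h, hmn]

lemma finsuppGrading_piece (n : ℤ) :
    (finsuppGrading R deg).piece n = Finsupp.supported R R (deg ⁻¹' {n}) := by
  classical
  simp only [Grading.piece, finsuppGrading, LinearMap.range_comp, Finsupp.range_restrictDom,
    Submodule.map_top, Submodule.range_subtype]

lemma single_mem_finsuppGrading_piece (j : ι) (a : R) :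
    Finsupp.single j a ∈ (finsuppGrading R deg).piece (deg j) := by
  rw [finsuppGrading_piece]
  exact Finsupp.single_mem_supported R a rfl

theorem isFreeOfFiniteType_finsuppGrading {R ι : Type v} [CommRing R] {deg : ι → ℤ}
    (hdeg : ∀ n, (deg ⁻¹' {n}).Finite) : (finsuppGrading R deg).IsFreeOfFiniteType :=
  ⟨ι, Finsupp.basisSingleOne, deg, fun j ↦ by
    simpa using single_mem_finsuppGrading_piece j (1 : R), hdeg⟩

theorem length_supported {K : Type*} [AddCommGroup K] [Module R K] [IsSimpleModule R K]
    (s : Set ι) : Module.length R (Finsupp.supported K R s) = s.encard := by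
  rw [(Finsupp.supportedEquivFinsupp s).length_eq, Module.length_finsupp, Module.length_eq_one,
    mul_one, ENat.card_coe_set_eq]

lemma map_mapRange_supported {M N : Type*} [AddCommGroup M] [Module R M] [AddCommGroup N]
    [Module R N] {f : M →ₗ[R] N} (hf : Function.Surjective f) (s : Set ι) :
    (Finsupp.supported M R s).map (Finsupp.mapRange.linearMap f) = Finsupp.supported N R s := by
  classical
  apply le_antisymm
  · rintro _ ⟨v, hv, rfl⟩
    exact fun j hj ↦ hv (Finsupp.support_mapRange (hf := map_zero f) hj)
  · intro w hw
    obtain ⟨v, rfl⟩ := Finsupp.mapRange_surjective f (map_zero f) hf w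
    refine ⟨v.filter (· ∈ s), (Finsupp.mem_supported' R _).2 fun j hj ↦ ?_, ?_⟩
    · simp [hj]
    ext j
    by_cases hj : j ∈ s
    · simp [hj]
    · simpa [hj] using ((Finsupp.mem_supported' R _).1 hw j hj).symm

theorem length_homologyGrading_piece {𝔪 : Ideal R} [𝔪.IsMaximal] {D : Module.End R (ι →₀ R)}
    (hD : (finsuppGrading R deg).IsHomogeneous (finsuppGrading R deg) 1 D)
    (hmin : ∀ v, D v ∈ (𝔪 • ⊤ : Submodule R (ι →₀ R))) (n : ℤ) :
    Module.length R ((homologyGrading 𝔪 hD).piece n) = (deg ⁻¹' {n}).encard := by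
  have : IsSimpleModule R (R ⧸ 𝔪) := isSimpleModule_iff_isCoatom.2 (Ideal.isMaximal_def.1 ‹_›)
  let q : (ι →₀ R) →ₗ[R] (ι →₀ R ⧸ 𝔪) := Finsupp.mapRange.linearMap (Submodule.mkQ 𝔪)
  have hq {v} : q v = 0 ↔ v ∈ (𝔪 • ⊤ : Submodule R (ι →₀ R)) := by
    simp [mem_smul_top_iff_repr (Finsupp.basisSingleOne : Module.Basis ι R (ι →₀ R)),
      Finsupp.ext_iff, q, Ideal.Quotient.eq_zero_iff_mem]
  have hcycles : cyclesMod 𝔪 D = ⊤ := eq_top_iff.2 fun v _ ↦ hmin v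
  let ψ : HomologyMod 𝔪 D →ₗ[R] (ι →₀ R ⧸ 𝔪) :=
    Submodule.liftQ _ (q ∘ₗ (cyclesMod 𝔪 D).subtype) fun z hz ↦ by
      obtain ⟨u, hu⟩ := mem_range_sup_smul_top.1 hz
      exact hq.2 ((Submodule.sub_mem_iff_left _ (hmin u)).1 hu)
  have hψ : ψ ∘ₗ HomologyMod.mk 𝔪 D = q ∘ₗ (cyclesMod 𝔪 D).subtype := LinearMap.ext fun _ ↦ rfl
  have hψ_inj (x) (h : ψ x = 0) : x = 0 := by
    obtain ⟨z, rfl⟩ := HomologyMod.mk_surjective x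
    rw [← LinearMap.comp_apply, hψ] at h
    exact HomologyMod.mk_eq_zero.2 ⟨0, by simpa using hq.1 h⟩
  rw [← length_map_eq_of_forall_eq_zero (f := ψ) fun x _ ↦ hψ_inj x, homologyGrading_piece_eq_map,
    ← Submodule.map_comp, hψ, Submodule.map_comp, Submodule.submoduleOf,
    Submodule.map_comap_subtype, hcycles, top_inf_eq, finsuppGrading_piece,
    map_mapRange_supported (Submodule.mkQ_surjective 𝔪), length_supported]

end FinsuppGrading

section Lift

variable {A B ι : Type*} [CommRing A] [CommRing B] [Algebra B A]

/-- The coordinatewise reduction from a free `B`-module to the free `A`-module on the same basis. -/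
noncomputable def finsuppReduction (B A ι : Type*) [CommRing A] [CommRing B] [Algebra B A] :
    (ι →₀ B) →ₗ[B] (ι →₀ A) :=
  Finsupp.mapRange.linearMap (Algebra.linearMap B A)

lemma finsuppReduction_apply (v : ι →₀ B) (j : ι) :
    finsuppReduction B A ι v j = algebraMap B A (v j) := rfl

lemma finsuppReduction_single (j : ι) (b : B) :
    finsuppReduction B A ι (Finsupp.single j b) = Finsupp.single j (algebraMap B A b) := by
  simp [finsuppReduction]

lemma finsuppReduction_surjective (hAB : Function.Surjective (algebraMap B A)) :
    Function.Surjective (finsuppReduction B A ι) :=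
  Finsupp.mapRange_surjective _ (map_zero (algebraMap B A)) hAB

lemma finsuppReduction_mem_smul_top {I : Ideal A} {v : ι →₀ B} :
    finsuppReduction B A ι v ∈ (I • ⊤ : Submodule A (ι →₀ A)) ↔
      v ∈ (I.comap (algebraMap B A) • ⊤ : Submodule B (ι →₀ B)) := by
  simp [mem_smul_top_iff_repr (Finsupp.basisSingleOne : Module.Basis ι A (ι →₀ A)),
    mem_smul_top_iff_repr (Finsupp.basisSingleOne : Module.Basis ι B (ι →₀ B)),
    finsuppReduction_apply]

lemma finsuppReduction_eq_zero {v : ι →₀ B} : finsuppReduction B A ι v = 0 ↔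
    v ∈ (RingHom.ker (algebraMap B A) • ⊤ : Submodule B (ι →₀ B)) := by
  rw [RingHom.ker_eq_comap_bot, ← finsuppReduction_mem_smul_top, Submodule.bot_smul,
    Submodule.mem_bot]

lemma finsuppReduction_proj (deg : ι → ℤ) (n : ℤ) (v : ι →₀ B) :
    finsuppReduction B A ι ((finsuppGrading B deg).proj n v) =
      (finsuppGrading A deg).proj n (finsuppReduction B A ι v) := by
  classical
  ext j
  by_cases h : deg j = n <;> simp [finsuppGrading, finsuppReduction_apply, h]

theorem exists_isAcyclicLift {A B ι : Type v} [CommRing A] [CommRing B] [Algebra B A]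
    (hAB : Function.Surjective (algebraMap B A)) {deg : ι → ℤ} (hdeg : ∀ n, (deg ⁻¹' {n}).Finite)
    {Δ : Module.End A (ι →₀ A)}
    (hΔ : (finsuppGrading A deg).IsHomogeneous (finsuppGrading A deg) 1 Δ)
    (hexact : Function.Exact Δ Δ) :
    ∃ D : Module.End B (ι →₀ B),
      IsAcyclicLift (RingHom.ker (algebraMap B A)) (finsuppGrading B deg) D ∧
      ∀ v, finsuppReduction B A ι (D v) = Δ (finsuppReduction B A ι v) := by
  set ρ := finsuppReduction B A ι
  choose lift hlift using finsuppReduction_surjective (ι := ι) hAB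
  let D : Module.End B (ι →₀ B) := Finsupp.linearCombination B fun j ↦
    (finsuppGrading B deg).proj (deg j + 1) (lift (Δ (Finsupp.single j 1)))
  have hD_single (j : ι) : D (Finsupp.single j 1) =
      (finsuppGrading B deg).proj (deg j + 1) (lift (Δ (Finsupp.single j 1))) := by simp [D]
  have hρD : ρ ∘ₗ D = Δ.restrictScalars B ∘ₗ ρ := by
    refine Finsupp.basisSingleOne.ext fun j ↦ ?_
    have hj := hΔ.apply_mem (single_mem_finsuppGrading_piece j 1)
    simp [ρ, hD_single, finsuppReduction_proj, hlift, finsuppReduction_single,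
      Grading.mem_piece.1 hj]
  replace hρD (v) : ρ (D v) = Δ (ρ v) := LinearMap.congr_fun hρD v
  refine ⟨D, ⟨isFreeOfFiniteType_finsuppGrading hdeg, ?_, ⟨fun v ↦ ?_, fun {v} hv ↦ ?_⟩⟩, hρD⟩
  · refine Grading.isHomogeneous_of_basis (b := Finsupp.basisSingleOne) (deg := deg)
      (fun j ↦ ?_) fun j ↦ ?_
    · simpa using single_mem_finsuppGrading_piece j (1 : B)
    · simpa [hD_single] using Grading.proj_mem _ _ _
  · rw [← finsuppReduction_eq_zero, hρD, hρD, hexact.apply_apply_eq_zero]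
  · rw [← finsuppReduction_eq_zero, hρD] at hv
    obtain ⟨w, hw⟩ := (hexact _).1 hv
    obtain ⟨u, rfl⟩ := finsuppReduction_surjective (ι := ι) hAB w
    exact ⟨u, by rw [← finsuppReduction_eq_zero, map_sub, hρD, hw, sub_self]⟩

end Lift

section Totalization

variable {A : Type*} [CommRing A] {G : ℤ → Type*} [∀ n, AddCommGroup (G n)] [∀ n, Module A (G n)]
  (δ : ∀ n, G n →ₗ[A] G (n + 1))

/-- The differential on the direct sum of all the terms of a cochain complex. -/
def totalDifferential : Module.End A (Π₀ n, G n) :=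
  DFinsupp.lsum ℕ fun n ↦ DFinsupp.lsingle (n + 1) ∘ₗ δ n

variable {δ}

lemma totalDifferential_single (n : ℤ) (w : G n) :
    totalDifferential δ (DFinsupp.single n w) = DFinsupp.single (n + 1) (δ n w) := by
  simp [totalDifferential]

lemma totalDifferential_apply (y : Π₀ n, G n) (n : ℤ) :
    totalDifferential δ y (n + 1) = δ n (y n) := by
  suffices DFinsupp.lapply (n + 1) ∘ₗ totalDifferential δ = δ n ∘ₗ DFinsupp.lapply n from
    LinearMap.congr_fun this y
  refine DFinsupp.lhom_ext fun m w ↦ ?_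
  obtain rfl | hmn := eq_or_ne m n
  · simp [totalDifferential_single]
  · simp [totalDifferential_single, hmn]

theorem exact_totalDifferential (hexact : ∀ n, Function.Exact (δ n) (δ (n + 1))) :
    Function.Exact (totalDifferential δ) (totalDifferential δ) := by
  classical
  intro y
  constructor
  · intro hy
    rw [← DFinsupp.sum_single (f := y)]
    refine Submodule.sum_mem (LinearMap.range (totalDifferential δ)) fun n _ ↦ ?_
    obtain ⟨n, rfl⟩ : ∃ m, n = m + 1 := ⟨n - 1, by ring⟩
    obtain ⟨w, hw⟩ := (hexact n (y (n + 1))).1 (by rw [← totalDifferential_apply, hy]; rfl)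
    exact ⟨DFinsupp.single n w, by rw [totalDifferential_single, hw]⟩
  · rintro ⟨w, rfl⟩
    ext n
    obtain ⟨n, rfl⟩ : ∃ m, n = m + 1 + 1 := ⟨n - 2, by ring⟩
    rw [totalDifferential_apply, totalDifferential_apply, (hexact n).apply_apply_eq_zero]
    rfl

lemma totalDifferential_mem_smul_top {I : Ideal A}
    (hmin : ∀ n, LinearMap.range (δ n) ≤ (I • ⊤ : Submodule A (G (n + 1)))) (y : Π₀ n, G n) :
    totalDifferential δ y ∈ (I • ⊤ : Submodule A (Π₀ n, G n)) := by
  induction y using DFinsupp.induction with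
  | h0 => simp
  | ha n w y _ _ ih =>
    rw [map_add, totalDifferential_single]
    exact add_mem (map_mem_smul_top (DFinsupp.lsingle (n + 1)) (hmin n ⟨w, rfl⟩)) ih

variable {ι : ℤ → Type*} (b : ∀ n, Module.Basis (ι n) A (G n))

lemma dfinsuppBasis_repr_single_mem_piece (n : ℤ) (w : G n) :
    (DFinsupp.basis b).repr (DFinsupp.single n w) ∈
      (finsuppGrading A (Sigma.fst : (Σ n, ι n) → ℤ)).piece n := by
  rw [finsuppGrading_piece]
  refine (Finsupp.mem_supported' A _).2 ?_
  rintro ⟨m, j⟩ (hm : m ≠ n)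
  change (b m).repr (DFinsupp.single n w m) j = 0
  rw [DFinsupp.single_eq_of_ne hm, map_zero, Finsupp.zero_apply]

lemma dfinsuppBasis_apply (i : Σ n, ι n) :
    DFinsupp.basis b i = DFinsupp.single i.1 (b i.1 i.2) := by
  rw [DFinsupp.basis, Module.Basis.coe_ofRepr]; simp

theorem isHomogeneous_conj_totalDifferential :
    (finsuppGrading A Sigma.fst).IsHomogeneous (finsuppGrading A Sigma.fst) 1
      ((DFinsupp.basis b).repr.conj (totalDifferential δ)) := by
  refine Grading.isHomogeneous_of_basis (b := Finsupp.basisSingleOne) (deg := Sigma.fst)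
    (fun i ↦ ?_) fun i ↦ ?_
  · simpa using single_mem_finsuppGrading_piece i (1 : A)
  · rw [LinearEquiv.conj_apply_apply, Finsupp.coe_basisSingleOne, Module.Basis.repr_symm_single_one,
      dfinsuppBasis_apply, totalDifferential_single]
    exact dfinsuppBasis_repr_single_mem_piece b (i.1 + 1) _

end Totalization

section FamilyGrowth

variable {A B : Type v} [CommRing A] [CommRing B] [Algebra B A]

lemma encard_sigma_fst_preimage {G : ℤ → Type*} [Nontrivial A] [∀ n, AddCommGroup (G n)]
    [∀ n, Module A (G n)] [∀ n, Module.Free A (G n)] [∀ n, Module.Finite A (G n)] (n : ℤ) :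
    ((Sigma.fst : (Σ n, Module.Free.ChooseBasisIndex A (G n)) → ℤ) ⁻¹' {n}).encard =
      Module.finrank A (G n) := by
  rw [← Set.range_sigmaMk, ← Set.image_univ, sigma_mk_injective.encard_image, Set.encard_univ,
    ENat.card_eq_coe_fintype_card, Module.finrank_eq_card_chooseBasisIndex]

theorem hasGrowth_finrank_neg [IsNoetherianRing B] {x y : ℕ → B} {c d s : ℕ}
    (hy : IsRegularSeq B y d) (hx : IsRegularSeq B x c)
    (hAB : Function.Surjective (algebraMap B A))
    (hker : RingHom.ker (algebraMap B A) = seqIdeal x c)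
    {𝔫 : Ideal A} [𝔫.IsMaximal] (h𝔫 : 𝔫.comap (algebraMap B A) = seqIdeal y d)
    {G : ℤ → Type v} [∀ n, AddCommGroup (G n)] [∀ n, Module A (G n)] [∀ n, Module.Free A (G n)]
    [∀ n, Module.Finite A (G n)] {δ : ∀ n, G n →ₗ[A] G (n + 1)}
    (hexact : ∀ n, Function.Exact (δ n) (δ (n + 1)))
    (hmin : ∀ n, LinearMap.range (δ n) ≤ (𝔫 • ⊤ : Submodule A (G (n + 1))))
    (hs : HasGrowth (fun n ↦ Module.finrank A (G n)) s) :
    HasGrowth (fun n ↦ Module.finrank A (G (-n))) s := by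
  have : Nontrivial A := not_subsingleton_iff_nontrivial.1 fun _ ↦
    ‹𝔫.IsMaximal›.ne_top (Subsingleton.elim _ _)
  have : (seqIdeal y d).IsMaximal := h𝔫 ▸ Ideal.comap_isMaximal_of_surjective _ hAB
  let b n := Module.Free.chooseBasis A (G n)
  have hΔ : Function.Exact ((DFinsupp.basis b).repr.conj (totalDifferential δ))
      ((DFinsupp.basis b).repr.conj (totalDifferential δ)) := by
    refine (exact_totalDifferential hexact).of_ladder_linearEquiv_of_exact
      (e₁ := (DFinsupp.basis b).repr) (e₂ := (DFinsupp.basis b).repr)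
      (e₃ := (DFinsupp.basis b).repr) ?_ ?_ <;> ext v <;> simp [LinearEquiv.conj_apply]
  obtain ⟨D, hD, hD_reduction⟩ := exists_isAcyclicLift hAB
    (fun n ↦ Set.encard_ne_top_iff.1 (by simp [encard_sigma_fst_preimage]))
    (isHomogeneous_conj_totalDifferential (δ := δ) b) hΔ
  have hD_min v : D v ∈ (seqIdeal y d • ⊤ : Submodule B _) := by
    rw [← h𝔫, ← finsuppReduction_mem_smul_top, hD_reduction]
    exact map_mem_smul_top (DFinsupp.basis b).repr.toLinearMap
      (totalDifferential_mem_smul_top hmin _)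
  rw [hker] at hD
  have hbetti n : hD.bettiNumber (seqIdeal y d) n = Module.finrank A (G n) := by
    rw [← Nat.cast_inj (R := ℕ∞), hD.natCast_bettiNumber (seqIdeal y d),
      length_homologyGrading_piece hD.isHomogeneous hD_min, encard_sigma_fst_preimage]
  have hxy : seqIdeal x c ≤ seqIdeal y d := hker ▸ h𝔫 ▸ Ideal.comap_mono bot_le
  simpa only [hbetti] using
    hD.hasGrowth_bettiNumber_neg hy hx hxy (by simpa only [hbetti] using hs)

lemma range_dualMap_le_smul_top {M N : Type*} [AddCommGroup M] [Module A M] [AddCommGroup N]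
    [Module A N] [Module.Free A M] [Module.Finite A M] {I : Ideal A} {f : M →ₗ[A] N}
    (hf : LinearMap.range f ≤ I • ⊤) :
    LinearMap.range f.dualMap ≤ (I • ⊤ : Submodule A (Module.Dual A M)) := by
  classical
  rintro _ ⟨g, rfl⟩
  rw [← (Module.Free.chooseBasis A M).sum_dual_apply_smul_coord (f.dualMap g)]
  refine sum_mem fun j _ ↦ Submodule.smul_mem_smul ?_ trivial
  simpa using map_mem_smul_top g (hf ⟨_, rfl⟩)

variable (X : TotallyAcyclicComplex A)

/-- The differential of a complex between two terms whose degrees are only propositionally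
consecutive. -/
def differentialOfEq {m n : ℤ} (h : m = n + 1) : X.C m →ₗ[A] X.C n :=
  h ▸ X.d n

variable {X}

lemma exact_differentialOfEq {l m n : ℤ} (hl : l = m + 1) (hm : m = n + 1) :
    Function.Exact (differentialOfEq X hl) (differentialOfEq X hm) := by
  subst hm hl
  exact LinearMap.exact_iff.2 (X.exact n).symm

lemma range_differentialOfEq_le {I : Ideal A} (hmin : ∀ n, LinearMap.range (X.d n) ≤ I • ⊤)
    {m n : ℤ} (h : m = n + 1) : LinearMap.range (differentialOfEq X h) ≤ I • ⊤ := by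
  subst h
  exact hmin n

theorem hasGrowth_finrank_iff_neg [IsNoetherianRing B] {x y : ℕ → B} {c d s : ℕ}
    (hy : IsRegularSeq B y d) (hx : IsRegularSeq B x c)
    (hAB : Function.Surjective (algebraMap B A))
    (hker : RingHom.ker (algebraMap B A) = seqIdeal x c)
    {𝔫 : Ideal A} [𝔫.IsMaximal] (h𝔫 : 𝔫.comap (algebraMap B A) = seqIdeal y d)
    (hmin : ∀ n, LinearMap.range (X.d n) ≤ 𝔫 • ⊤) :
    HasGrowth (fun n ↦ Module.finrank A (X.C n)) s ↔
      HasGrowth (fun n ↦ Module.finrank A (X.C (-n))) s := by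
  have := X.free
  have := X.fin
  have hdual n : Module.finrank A (Module.Dual A (X.C n)) = Module.finrank A (X.C n) :=
    (Module.Free.chooseBasis A (X.C n)).toDualEquiv.finrank_eq.symm
  have hneg (n : ℤ) : Module.finrank A (X.C (- -n)) = Module.finrank A (X.C n) := by rw [neg_neg]
  constructor
  · simpa only [hdual] using hasGrowth_finrank_neg (G := fun n ↦ Module.Dual A (X.C n))
      (δ := fun n ↦ (X.d n).dualMap) hy hx hAB hker h𝔫
      (fun n ↦ LinearMap.exact_iff.2 (X.dualExact n).symm)
      (fun n ↦ range_dualMap_le_smul_top (hmin n))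
  · simpa only [hneg] using hasGrowth_finrank_neg (G := fun n ↦ X.C (-n))
      (δ := fun n ↦ differentialOfEq X (by ring)) hy hx hAB hker h𝔫
      (fun n ↦ exact_differentialOfEq _ _) (fun n ↦ range_differentialOfEq_le hmin _)

lemma complexityPlus_congr {β γ : ℤ → ℕ}
    (h : ∀ s, HasGrowth (fun n ↦ β n) s ↔ HasGrowth (fun n ↦ γ n) s) :
    complexityPlus β = complexityPlus γ := by
  simp only [hasGrowth_iff_exists_real] at h
  simp only [complexityPlus, h]

end FamilyGrowth

end SymmetricGrowth

open SymmetricGrowth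

theorem symmetric_growth_over_complete_intersection_general {B : Type u} [CommRing B]
    [IsNoetherianRing B] {xs ys : List B} (hxs : RingTheory.Sequence.IsWeaklyRegular B xs)
    (hys : RingTheory.Sequence.IsWeaklyRegular B ys) {A : Type u} [CommRing A] {π : B →+* A}
    (hπ : Function.Surjective π) (hker : RingHom.ker π = Ideal.ofList xs) {𝔫 : Ideal A}
    [𝔫.IsMaximal] (h𝔫 : 𝔫.comap π = Ideal.ofList ys) (X : TotallyAcyclicComplex A)
    (hmin : ∀ n, LinearMap.range (X.d n) ≤ 𝔫 • ⊤) :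
    complexityPlus (fun n ↦ Module.finrank A (X.C n)) =
      complexityMinus (fun n ↦ Module.finrank A (X.C n)) := by
  algebraize [π]
  refine complexityPlus_congr fun s ↦ hasGrowth_finrank_iff_neg (isRegularSeq_getD hys)
    (isRegularSeq_getD hxs) hπ ?_ ?_ hmin
  · rwa [seqIdeal_getD xs le_rfl, List.take_length]
  · rwa [seqIdeal_getD ys le_rfl, List.take_length]

theorem symmetric_growth_over_complete_intersection
    (B : Type u) [CommRing B] [IsLocalRing B] (hB : IsRegularLocal B)
    (xs : List B) (hxs : ∀ x ∈ xs, x ∈ maximalIdeal B)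
    (hreg : RingTheory.Sequence.IsRegular B xs)
    -- A = B/(x₁, …, x_c), presented via a surjection with kernel (x₁, …, x_c)
    (A : Type u) [CommRing A] [IsLocalRing A]
    (π : B →+* A) (hπ : Function.Surjective π)
    (hker : RingHom.ker π = Ideal.ofList xs)
    -- a totally acyclic minimal complex of finitely generated free A-modules
    (X : TotallyAcyclicComplex A)
    (hmin : ∀ n : ℤ, LinearMap.range (X.d n) ≤
      (maximalIdeal A) • (⊤ : Submodule A (X.C n))) :
    -- conclusion: C has symmetric growth
    complexityPlus (fun n => Module.finrank A (X.C n)) =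
      complexityMinus (fun n => Module.finrank A (X.C n)) := by
  have := hB.1
  obtain ⟨ys, hys, hys_span⟩ := exists_isWeaklyRegular_ofList_eq_maximalIdeal hB
  have : IsLocalHom π := .of_surjective π hπ
  have hcomap : (maximalIdeal A).comap π = Ideal.ofList ys :=
    (maximalIdeal_comap π).trans hys_span.symm
  exact symmetric_growth_over_complete_intersection_general hreg.toIsWeaklyRegular hys hπ hker
    hcomap X hmin
end

section
/- Let A be a commutative Noetherian local ring and let M be a finitely generated A-module of Gorenstein dimension zero. If M has finite projective dimension over A, then M is a free A-module. -/
/-!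
STATEMENT 8: Let A be a commutative Noetherian local ring and M a finitely generated
A-module of Gorenstein dimension zero.  If M has finite projective dimension over A,
then M is a free A-module.
-/

universe u

open CategoryTheory

/-- The Ext module `Ext_A^n(M, N)` of two `A`-modules. -/
noncomputable abbrev ExtModule (A : Type u) [CommRing A]
    (M N : Type u) [AddCommGroup M] [Module A M] [AddCommGroup N] [Module A N]
    (n : ℕ) : Type u :=
  ((Ext A (ModuleCat.{u} A) n).obj (Opposite.op (ModuleCat.of A M))).obj (ModuleCat.of A N)

/-- A module `M` over a commutative Noetherian local ring has Gorenstein dimension zero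
(is totally reflexive) if the canonical map `M → M**` is bijective and
`Ext_A^n(M, A) = 0 = Ext_A^n(M*, A)` for all `n ≥ 1`. -/
def IsGorensteinDimZero (A : Type u) [CommRing A]
    (M : Type u) [AddCommGroup M] [Module A M] : Prop :=
  Function.Bijective (Module.Dual.eval A M) ∧
  (∀ n : ℕ, 1 ≤ n → Subsingleton (ExtModule A M A n)) ∧
  (∀ n : ℕ, 1 ≤ n → Subsingleton (ExtModule A (Module.Dual A M) A n))

/-- A finite free resolution `0 → F_ℓ → ⋯ → F₁ → F₀ → M → 0` of `M` by finitely
generated free modules; its existence expresses that `M` (finitely generated over a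
Noetherian local ring) has finite projective dimension. -/
structure FiniteFreeResolution (B : Type u) [CommRing B]
    (M : Type u) [AddCommGroup M] [Module B M] : Type (u + 1) where
  len : ℕ
  F : ℕ → Type u
  [acg : ∀ n, AddCommGroup (F n)]
  [mod : ∀ n, Module B (F n)]
  free : ∀ n, Module.Free B (F n)
  fin : ∀ n, Module.Finite B (F n)
  d : ∀ n : ℕ, F (n + 1) →ₗ[B] F n
  aug : F 0 →ₗ[B] M
  augSurj : Function.Surjective aug
  ex0 : LinearMap.range (d 0) = LinearMap.ker aug
  ex : ∀ n : ℕ, LinearMap.range (d (n + 1)) = LinearMap.ker (d n)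
  bounded : ∀ n : ℕ, len ≤ n → Subsingleton (F n)

/-!
Suppose `Ext^n(M, A) = 0` for all `n ≥ 1`. By additivity `Ext^n(M, F) = 0` for every finite free
`F`, so dimension shifting along a finite free resolution of any module `N` gives `Ext^n(M, N) = 0`
for all `n ≥ 1`. If `M` itself has such a resolution, take for `N` its first syzygy: since
`Ext^1(M, N) = 0`, the sequence `0 → N → F₀ → M → 0` splits. Hence `M` is finite projective, and
therefore free when `A` is local.
-/

section ExtInAbelianCategory

universe w

variable {C : Type*} [Category* C] [Abelian C] [HasExt.{w} C]

/-- The two `Ext`s are defined by derived functors and by morphisms in the derived category,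
respectively; a projective resolution of `X` computes both. -/
theorem subsingleton_abelianExt_succ_of_isZero_ext {R : Type*} [Ring R] [Linear R C]
    [EnoughProjectives C] {X Y : C} {n : ℕ}
    (h : Limits.IsZero (((Ext R C (n + 1)).obj (Opposite.op X)).obj Y)) :
    Subsingleton (Abelian.Ext X Y (n + 1)) := by
  let P := projectiveResolution X
  have hexact : (P.complex.linearYonedaObj R Y).ExactAt (n + 1) := by
    rw [HomologicalComplex.exactAt_iff_isZero_homology]
    exact h.of_iso (P.isoExt (n + 1) Y).symm
  rw [HomologicalComplex.exactAt_iff' _ n (n + 1) (n + 1 + 1) (by simp) (by simp),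
    ShortComplex.moduleCat_exact_iff] at hexact
  refine subsingleton_of_forall_eq 0 fun α ↦ ?_
  obtain ⟨f, hf, rfl⟩ := P.extMk_surjective α (n + 1 + 1) rfl
  exact (P.extMk_eq_zero_iff f (n + 1 + 1) rfl hf n rfl).2 (hexact f hf)

theorem projective_X₃_of_subsingleton_ext_one {S : ShortComplex C}
    (hS : S.ShortExact) [Projective S.X₂] [Subsingleton (Abelian.Ext S.X₃ S.X₁ 1)] :
    Projective S.X₃ := by
  obtain ⟨σ, hσ⟩ := Abelian.Ext.covariant_sequence_exact₃ _ hS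
    (Abelian.Ext.mk₀ (𝟙 S.X₃)) (zero_add 1) (Subsingleton.elim _ _)
  obtain ⟨s, rfl⟩ := Abelian.Ext.homEquiv₀.symm.surjective σ
  have hs : s ≫ S.g = 𝟙 S.X₃ := Abelian.Ext.homEquiv₀.symm.injective (by simpa using hσ)
  exact Retract.projective ⟨s, S.g, hs⟩

theorem subsingleton_ext_X₃_of_shortExact {S : ShortComplex C} (hS : S.ShortExact) (X : C) (n : ℕ)
    [Subsingleton (Abelian.Ext X S.X₂ n)] [Subsingleton (Abelian.Ext X S.X₁ (n + 1))] :
    Subsingleton (Abelian.Ext X S.X₃ n) := by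
  refine subsingleton_of_forall_eq 0 fun α ↦ ?_
  obtain ⟨β, rfl⟩ := Abelian.Ext.covariant_sequence_exact₃ X hS α rfl (Subsingleton.elim _ _)
  rw [Subsingleton.elim β 0, Abelian.Ext.zero_comp]

end ExtInAbelianCategory

theorem subsingleton_ext_of_finite_projective {A : Type u} [Ring A] {X : ModuleCat.{u} A} {n : ℕ}
    [Subsingleton (Abelian.Ext X (ModuleCat.of A A) n)]
    (P : Type u) [AddCommGroup P] [Module A P] [Module.Finite A P] [Module.Projective A P] :
    Subsingleton (Abelian.Ext X (ModuleCat.of A P) n) := by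
  obtain ⟨k, f, g, -, -, hfg⟩ := Module.Finite.exists_comp_eq_id_of_projective A P
  let p (i : Fin k) : ModuleCat.of A P ⟶ ModuleCat.of A A :=
    ModuleCat.ofHom (LinearMap.proj i ∘ₗ g)
  let q (i : Fin k) : ModuleCat.of A A ⟶ ModuleCat.of A P :=
    ModuleCat.ofHom (f ∘ₗ LinearMap.single A (fun _ ↦ A) i)
  have hpq : 𝟙 (ModuleCat.of A P) = ∑ i, p i ≫ q i := by
    ext x
    have hx : ∑ i, Pi.single i (g x i) = g x := Finset.univ_sum_single (g x)
    simpa [p, q, ← map_sum, hx] using (LinearMap.congr_fun hfg x).symm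
  refine subsingleton_of_forall_eq 0 fun α ↦ ?_
  calc α = α.comp (Abelian.Ext.mk₀ (∑ i, p i ≫ q i)) (add_zero n) := by
        rw [← hpq, Abelian.Ext.comp_mk₀_id]
    _ = ∑ i, (α.comp (Abelian.Ext.mk₀ (p i)) (add_zero n)).comp
          (Abelian.Ext.mk₀ (q i)) (add_zero n) := by
        simp [Abelian.Ext.mk₀_sum, Abelian.Ext.comp_sum]
    _ = 0 := Finset.sum_eq_zero fun i _ ↦ by
        rw [Subsingleton.elim (α.comp _ _) 0, Abelian.Ext.zero_comp]

namespace FiniteFreeResolution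

attribute [local instance] acg mod

variable {A : Type u} [CommRing A] {N : Type u} [AddCommGroup N] [Module A N]

/-- The resolution of the first syzygy `ker aug` obtained by dropping `F₀`. The truncated
subtraction is harmless: `len` only bounds the degrees of nonzero terms, so if `len = 0` then all
terms vanish. -/
def syzygy (R : FiniteFreeResolution A N) : FiniteFreeResolution A (LinearMap.ker R.aug) where
  len := R.len - 1
  F n := R.F (n + 1)
  free n := R.free (n + 1)
  fin n := R.fin (n + 1)
  d n := R.d (n + 1)
  aug := (R.d 0).codRestrict (LinearMap.ker R.aug) fun x ↦ R.ex0 ▸ LinearMap.mem_range_self _ x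
  augSurj := by
    rintro ⟨y, hy⟩
    obtain ⟨x, rfl⟩ := R.ex0.ge hy
    exact ⟨x, rfl⟩
  ex0 := by rw [LinearMap.ker_codRestrict, R.ex]
  ex n := R.ex (n + 1)
  bounded n hn := R.bounded (n + 1) (by omega)

theorem subsingleton_ext_succ {X : ModuleCat.{u} A} (R : FiniteFreeResolution A N)
    (hX : ∀ n, Subsingleton (Abelian.Ext X (ModuleCat.of A A) (n + 1))) (n : ℕ) :
    Subsingleton (Abelian.Ext X (ModuleCat.of A N) (n + 1)) := by
  induction hlen : R.len generalizing N n with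
  | zero =>
    have := R.bounded 0 hlen.le
    have : Subsingleton N := R.augSurj.subsingleton
    exact subsingleton_ext_of_finite_projective N
  | succ len ih =>
    have := R.free 0
    have := R.fin 0
    have : Subsingleton (Abelian.Ext X (ModuleCat.of A (R.F 0)) (n + 1)) :=
      subsingleton_ext_of_finite_projective _
    have : Subsingleton (Abelian.Ext X (ModuleCat.of A (LinearMap.ker R.aug)) (n + 1 + 1)) :=
      ih R.syzygy (n + 1) (by simp [syzygy, hlen])
    exact subsingleton_ext_X₃_of_shortExact
      (LinearMap.shortExact_shortComplexKer R.augSurj) X (n + 1)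

theorem projective (R : FiniteFreeResolution A N)
    (hN : ∀ n, Subsingleton (Abelian.Ext (ModuleCat.of A N) (ModuleCat.of A A) (n + 1))) :
    Module.Projective A N := by
  have := R.free 0
  have : Subsingleton (Abelian.Ext (ModuleCat.of A N) (ModuleCat.of A (LinearMap.ker R.aug)) 1) :=
    R.syzygy.subsingleton_ext_succ hN 0
  have : Projective (ModuleCat.of A (R.F 0)) :=
    (IsProjective.iff_projective (R.F 0)).1 inferInstance
  exact (IsProjective.iff_projective N).2 <|
    projective_X₃_of_subsingleton_ext_one (LinearMap.shortExact_shortComplexKer R.augSurj)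

theorem finite (R : FiniteFreeResolution A N) : Module.Finite A N :=
  have := R.fin 0
  Module.Finite.of_surjective R.aug R.augSurj

end FiniteFreeResolution

theorem free_of_isGorensteinDimZero_of_finite_projective_dimension_general
    (A : Type u) [CommRing A] [IsLocalRing A]
    (M : Type u) [AddCommGroup M] [Module A M]
    (hExt : ∀ n : ℕ, 1 ≤ n → Subsingleton (ExtModule A M A n))
    (hpd : Nonempty (FiniteFreeResolution A M)) :
    Module.Free A M := by
  obtain ⟨R⟩ := hpd
  have hM (n : ℕ) : Subsingleton (Abelian.Ext (ModuleCat.of A M) (ModuleCat.of A A) (n + 1)) :=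
    have := hExt (n + 1) n.succ_pos
    subsingleton_abelianExt_succ_of_isZero_ext (R := A) (ModuleCat.isZero_of_subsingleton _)
  have : Module.Projective A M := R.projective hM
  have : Module.Finite A M := R.finite
  exact Module.free_of_flat_of_isLocalRing

theorem free_of_isGorensteinDimZero_of_finite_projective_dimension
    (A : Type u) [CommRing A] [IsNoetherianRing A] [IsLocalRing A]
    (M : Type u) [AddCommGroup M] [Module A M] [Module.Finite A M]
    (hM : IsGorensteinDimZero A M)
    (hpd : Nonempty (FiniteFreeResolution A M)) :
    Module.Free A M :=
  free_of_isGorensteinDimZero_of_finite_projective_dimension_general A M hM.2.1 hpd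
end
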